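/- Let p ≥ q ≥ 1 and n = p + q. For γ = (γ₁ ≥ … ≥ γ_n ≥ 0) ∈ ℝⁿ, s = (s₁ ≥ … ≥ s_q ≥ 0) ∈ ℝ^q and t = (t₁ ≥ … ≥ t_q ≥ 0) ∈ ℝ^q, the triple (γ, s, t) belongs to S(p,q) (i.e. there exists an n×n complex matrix X with s(X) = γ, s(X₁₂) = s and s(X₂₁) = t) if and only if (γ̂, ŝ^{p,q}, t̂^{p,q}) ∈ LR(n,n). -/

import Mathlib

open Matrix

/-- Eigenvalues of a (Hermitian) complex matrix, listed in decreasing order. -/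
noncomputable def eigVec {k : ℕ} (X : Matrix (Fin k) (Fin k) ℂ) (hX : X.IsHermitian) :
    Fin k → ℝ :=
  fun i => hX.eigenvalues (Tuple.sort hX.eigenvalues i.rev)

/-- The `i`-th (0-based) singular value of a rectangular complex matrix:
the square root of the `i`-th largest eigenvalue of `Y * Yᴴ` (and `0` for `i ≥ a`). -/
noncomputable def sval {a b : ℕ} (Y : Matrix (Fin a) (Fin b) ℂ) (i : ℕ) : ℝ :=
  if h : i < a then
    Real.sqrt (eigVec (Y * Yᴴ) (Matrix.isHermitian_mul_conjTranspose_self Y) ⟨i, h⟩)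
  else 0

/-- The Horn cone `Horn(k)`. -/
def Horn (k : ℕ) : Set ((Fin k → ℝ) × (Fin k → ℝ) × (Fin k → ℝ)) :=
  { v | ∃ (X Y : Matrix (Fin k) (Fin k) ℂ) (hX : X.IsHermitian) (hY : Y.IsHermitian),
      v.1 = eigVec X hX ∧ v.2.1 = eigVec Y hY ∧ v.2.2 = eigVec (X + Y) (hX.add hY) }

/-- The Littlewood–Richardson cone `LR(m,n)`. -/
def LRcone (m n : ℕ) : Set ((Fin (m + n) → ℝ) × (Fin m → ℝ) × (Fin n → ℝ)) :=
  { v | ∃ (M : Matrix (Fin (m + n)) (Fin (m + n)) ℂ) (hM : M.IsHermitian),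
      v.1 = eigVec M hM ∧
      v.2.1 = eigVec (M.submatrix (Fin.castAdd n) (Fin.castAdd n))
        (hM.submatrix (Fin.castAdd n)) ∧
      v.2.2 = eigVec (M.submatrix (Fin.natAdd m) (Fin.natAdd m))
        (hM.submatrix (Fin.natAdd m)) }

/-- Top-left `p × p` block. -/
def blockTL (p q : ℕ) (X : Matrix (Fin (p + q)) (Fin (p + q)) ℂ) : Matrix (Fin p) (Fin p) ℂ :=
  X.submatrix (Fin.castAdd q) (Fin.castAdd q)

/-- Top-right `p × q` block. -/
def blockTR (p q : ℕ) (X : Matrix (Fin (p + q)) (Fin (p + q)) ℂ) : Matrix (Fin p) (Fin q) ℂ :=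
  X.submatrix (Fin.castAdd q) (Fin.natAdd p)

/-- Bottom-left `q × p` block. -/
def blockBL (p q : ℕ) (X : Matrix (Fin (p + q)) (Fin (p + q)) ℂ) : Matrix (Fin q) (Fin p) ℂ :=
  X.submatrix (Fin.natAdd p) (Fin.castAdd q)

/-- Bottom-right `q × q` block. -/
def blockBR (p q : ℕ) (X : Matrix (Fin (p + q)) (Fin (p + q)) ℂ) : Matrix (Fin q) (Fin q) ℂ :=
  X.submatrix (Fin.natAdd p) (Fin.natAdd p)

/-- `λ* = (−λ_k, …, −λ_1)`. -/
def starVec {k : ℕ} (x : Fin k → ℝ) : Fin k → ℝ := fun i => -x i.rev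

/-- `ŝ^{p,q} = (s₁, …, s_q, 0, …, 0, −s_q, …, −s₁) ∈ ℝ^{p+q}` (with `p − q` middle zeros). -/
noncomputable def hatPQ (p q : ℕ) (s : Fin q → ℝ) : Fin (p + q) → ℝ :=
  fun i =>
    if h : (i : ℕ) < q then s ⟨i, h⟩
    else if h' : (i : ℕ) < p then 0
    else -s ⟨p + q - 1 - i, by have := i.isLt; omega⟩

/-- The cone `A(p,q)`: pairs `(e(X), s(X₁₂))` for `X` Hermitian of size `p+q`. -/
def coneA (p q : ℕ) : Set ((Fin (p + q) → ℝ) × (Fin q → ℝ)) :=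
  { v | ∃ (X : Matrix (Fin (p + q)) (Fin (p + q)) ℂ) (hX : X.IsHermitian),
      v.1 = eigVec X hX ∧ ∀ i : Fin q, v.2 i = sval (blockTR p q X) (i : ℕ) }

/-- The cone `S(p,q)`: triples `(s(X), s(X₁₂), s(X₂₁))`. -/
def coneS (p q : ℕ) : Set ((Fin (p + q) → ℝ) × (Fin q → ℝ) × (Fin q → ℝ)) :=
  { v | ∃ X : Matrix (Fin (p + q)) (Fin (p + q)) ℂ,
      (∀ i : Fin (p + q), v.1 i = sval X (i : ℕ)) ∧
      (∀ i : Fin q, v.2.1 i = sval (blockTR p q X) (i : ℕ)) ∧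
      (∀ i : Fin q, v.2.2 i = sval (blockBL p q X) (i : ℕ)) }

/-- The cone `T(p,q)`: triples `(s(X), s(X₁₁), s(X₂₂))`. -/
def coneT (p q : ℕ) : Set ((Fin (p + q) → ℝ) × (Fin p → ℝ) × (Fin q → ℝ)) :=
  { v | ∃ X : Matrix (Fin (p + q)) (Fin (p + q)) ℂ,
      (∀ i : Fin (p + q), v.1 i = sval X (i : ℕ)) ∧
      (∀ i : Fin p, v.2.1 i = sval (blockTL p q X) (i : ℕ)) ∧
      (∀ i : Fin q, v.2.2 i = sval (blockBR p q X) (i : ℕ)) }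

/-- `μ(A) = (a_r − r ≥ … ≥ a₂ − 2 ≥ a₁ − 1)` as a decreasing real vector, for
`A = {a₁ < … < a_r}` a subset of `[n]` (0-based indexing internally). -/
noncomputable def muVec {n r : ℕ} (A : Finset (Fin n)) (h : A.card = r) : Fin r → ℝ :=
  fun k => (((A.orderIsoOfFin h k.rev : Fin n) : ℕ) : ℝ) - ((k.rev : ℕ) : ℝ)

/-- `A^o = {ℓ + 1 − a : a ∈ A}` inside `[ℓ]`. -/
def opp {n : ℕ} (A : Finset (Fin n)) : Finset (Fin n) := A.image Fin.rev

/-- `|s|_{K ∩ [q]}` where `K ⊆ [n]`, `s ∈ ℝ^q` and `[q]` is viewed inside `[n]`. -/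
noncomputable def sumRestr {n q : ℕ} (s : Fin q → ℝ) (K : Finset (Fin n)) : ℝ :=
  ∑ i ∈ K, (if h : (i : ℕ) < q then s ⟨i, h⟩ else 0)

/-- The augmented matrix `Ŷ^{p,q} = [[0, Y], [Yᴴ, 0]]` of size `p + q`. -/
def hatM (p q : ℕ) (Y : Matrix (Fin p) (Fin q) ℂ) : Matrix (Fin (p + q)) (Fin (p + q)) ℂ :=
  Matrix.reindex finSumFinEquiv finSumFinEquiv (Matrix.fromBlocks 0 Y Yᴴ 0)

theorem MvPolynomial.eq_zero_of_eventually_eval_eq_zero {τ : Type*} [Finite τ]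
    (P : MvPolynomial τ ℂ) (z₀ : τ → ℂ) (h : ∀ᶠ z in nhds z₀, MvPolynomial.eval z P = 0) :
    P = 0 := by
  rw [nhds_pi, Filter.eventually_iff, Filter.mem_pi'] at h
  obtain ⟨I, t, ht, hsub⟩ := h
  refine MvPolynomial.funext_set t (fun i => ?_) (fun x hx => ?_)
  · exact infinite_of_mem_nhds _ (ht i)
  · rw [map_zero]
    exact hsub (fun i _ => hx i trivial)

theorem MvPolynomial.dense_eval_ne_zero {τ : Type*} [Finite τ] {P : MvPolynomial τ ℂ}
    (hP : P ≠ 0) : Dense {z : τ → ℂ | MvPolynomial.eval z P ≠ 0} := by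
  intro z₀
  rw [mem_closure_iff_frequently]
  intro h
  refine hP (P.eq_zero_of_eventually_eval_eq_zero z₀ ?_)
  filter_upwards [h] with z hz
  simpa using hz

/-- A polynomial map over `ℂ` whose range is a neighbourhood of some point has dense range. -/
theorem MvPolynomial.denseRange_of_range_mem_nhds {σ τ : Type*} [Finite σ] [Finite τ]
    (p : τ → MvPolynomial σ ℂ) (z₀ : τ → ℂ)
    (h : Set.range (fun (x : σ → ℂ) t => MvPolynomial.eval x (p t)) ∈ nhds z₀) :
    DenseRange (fun (x : σ → ℂ) t => MvPolynomial.eval x (p t)) := by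
  set f : MvPolynomial τ ℂ →ₐ[ℂ] MvPolynomial σ ℂ := MvPolynomial.aeval p with hf
  have heval : ∀ (x : σ → ℂ) (P : MvPolynomial τ ℂ),
      MvPolynomial.eval x (f P) = MvPolynomial.eval (fun t => MvPolynomial.eval x (p t)) P := by
    intro x P
    have := MvPolynomial.map_aeval p (MvPolynomial.eval x) P
    rw [hf, this]
    congr 1
    ext <;> simp
  have hinj : Function.Injective f := by
    rw [injective_iff_map_eq_zero]
    intro P hP
    refine P.eq_zero_of_eventually_eval_eq_zero z₀ ?_
    filter_upwards [h]
    rintro _ ⟨x, rfl⟩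
    rw [← heval, hP, map_zero]
  have hfp : (f : MvPolynomial τ ℂ →+* MvPolynomial σ ℂ).FinitePresentation := by
    refine RingHom.FinitePresentation.of_comp_finiteType (algebraMap ℂ (MvPolynomial τ ℂ)) ?_ ?_
    · have : (f : MvPolynomial τ ℂ →+* MvPolynomial σ ℂ).comp (algebraMap ℂ _)
          = algebraMap ℂ _ := f.comp_algebraMap
      rw [this]
      exact RingHom.finitePresentation_algebraMap.mpr inferInstance
    · exact RingHom.finiteType_algebraMap.mpr inferInstance
  obtain ⟨S, hS⟩ := PrimeSpectrum.exists_constructibleSetData_iff.mpr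
    (PrimeSpectrum.isConstructible_range_comap hfp)
  have hbot : (⊥ : PrimeSpectrum (MvPolynomial τ ℂ)) ∈ S.toSet := by
    rw [hS]
    refine ⟨⊥, ?_⟩
    ext x
    have h1 : x ∈ (PrimeSpectrum.comap (f : MvPolynomial τ ℂ →+* MvPolynomial σ ℂ) ⊥).asIdeal ↔
      f x = 0 := Iff.rfl
    have h2 : x ∈ (⊥ : PrimeSpectrum (MvPolynomial τ ℂ)).asIdeal ↔ x = 0 := Iff.rfl
    rw [h1, h2, map_eq_zero_iff f hinj]
  obtain ⟨C, hC, hCbot⟩ : ∃ C ∈ S, (⊥ : PrimeSpectrum (MvPolynomial τ ℂ)) ∈ C.toSet := by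
    simpa [PrimeSpectrum.ConstructibleSetData.toSet] using hbot
  have hg : ∀ i, C.g i = 0 := fun i => hCbot.1 ⟨i, rfl⟩
  have ha : C.f ≠ 0 := fun h0 => hCbot.2 (by rintro _ rfl; exact h0)
  refine (MvPolynomial.dense_eval_ne_zero ha).mono fun z hz => ?_
  have hmax : (MvPolynomial.vanishingIdeal ℂ {z}).IsMaximal := inferInstance
  obtain ⟨P, hP⟩ : (⟨MvPolynomial.vanishingIdeal ℂ {z}, hmax.isPrime⟩ : PrimeSpectrum _) ∈
      Set.range (PrimeSpectrum.comap (f : MvPolynomial τ ℂ →+* MvPolynomial σ ℂ)) := by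
    rw [← hS]
    refine Set.mem_biUnion hC ⟨?_, ?_⟩
    · rintro _ ⟨i, rfl⟩
      rw [hg i]
      exact Ideal.zero_mem _
    · intro h0
      refine hz ?_
      have : C.f ∈ MvPolynomial.vanishingIdeal ℂ {z} := h0 rfl
      simpa using (MvPolynomial.mem_vanishingIdeal_singleton_iff z _).1 this
  obtain ⟨m, hm, hPm⟩ := P.asIdeal.exists_le_maximal P.2.ne_top
  obtain ⟨w, rfl⟩ := (MvPolynomial.isMaximal_iff_eq_vanishingIdeal_singleton).1 hm
  refine ⟨w, _root_.funext fun t => ?_⟩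
  have h1 : (MvPolynomial.X t - MvPolynomial.C (z t)) ∈ MvPolynomial.vanishingIdeal ℂ {z} := by
    rw [MvPolynomial.mem_vanishingIdeal_singleton_iff]; simp
  have h2 : f (MvPolynomial.X t - MvPolynomial.C (z t)) ∈ P.asIdeal := by
    have := congrArg PrimeSpectrum.asIdeal hP
    rw [← show _ = MvPolynomial.vanishingIdeal ℂ {z} from this] at h1
    exact h1
  have h3 := (MvPolynomial.mem_vanishingIdeal_singleton_iff w _).1 (hPm h2)
  simpa [hf, sub_eq_zero] using h3

section Density

variable {ι : Type*} [Fintype ι] [DecidableEq ι]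

open scoped Classical in
/-- The matrix obtained from `X` by keeping only the entries allowed by `P`. -/
noncomputable def maskEntries {R : Type*} [Zero R] (P : ι → ι → Prop) (X : Matrix ι ι R) :
    Matrix ι ι R :=
  Matrix.of fun i j => if P i j then X i j else 0

omit [Fintype ι] [DecidableEq ι] in
theorem maskEntries_eq_self {R : Type*} [Zero R] {P : ι → ι → Prop} {X : Matrix ι ι R}
    (h : ∀ i j, ¬ P i j → X i j = 0) : maskEntries P X = X := by
  ext i j
  by_cases hP : P i j <;> simp [maskEntries, hP, h]

omit [Fintype ι] in
theorem maskEntries_one {R : Type*} [Zero R] [One R] {P : ι → ι → Prop} (h : ∀ i, P i i) :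
    maskEntries P (1 : Matrix ι ι R) = 1 := by
  refine maskEntries_eq_self fun i j hij => ?_
  rw [Matrix.one_apply_ne]
  rintro rfl
  exact hij (h i)

omit [Fintype ι] in
theorem maskEntries_single {P : ι → ι → Prop} {i j : ι} (h : P i j) :
    maskEntries P (Matrix.single i j (1 : ℂ)) = Matrix.single i j 1 := by
  refine maskEntries_eq_self fun k l hkl => ?_
  rw [Matrix.single_apply_of_ne]
  rintro ⟨rfl, rfl⟩
  exact hkl h

omit [Fintype ι] [DecidableEq ι] in
theorem maskEntries_zero (P : ι → ι → Prop) : maskEntries P (0 : Matrix ι ι ℂ) = 0 :=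
  maskEntries_eq_self fun _ _ _ => rfl

/-- `maskEntries` as a linear map. -/
noncomputable def maskLinear (P : ι → ι → Prop) : Matrix ι ι ℂ →ₗ[ℂ] Matrix ι ι ℂ where
  toFun := maskEntries P
  map_add' X Y := by
    ext i j
    by_cases h : P i j <;> simp [maskEntries, h]
  map_smul' c X := by
    ext i j
    by_cases h : P i j <;> simp [maskEntries, h]

omit [DecidableEq ι] in
theorem Matrix.trace_conjTranspose_mul_eq_sum (X Y : Matrix ι ι ℂ) :
    (Xᴴ * Y).trace = ∑ i, ∑ j, star (X i j) * Y i j := by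
  rw [Matrix.trace, Finset.sum_comm]
  simp [Matrix.mul_apply]

theorem Matrix.trace_conjTranspose_mul_single (Z : Matrix ι ι ℂ) (i j : ι) :
    (Zᴴ * Matrix.single i j 1).trace = star (Z i j) := by
  rw [Matrix.trace_mul_single, MulOpposite.op_one, one_smul, Matrix.conjTranspose_apply]

theorem Matrix.linearMap_surjective_of_orthogonal {E : Type*} [AddCommGroup E] [Module ℂ E]
    (L : E →ₗ[ℂ] Matrix ι ι ℂ)
    (h : ∀ ξ : Matrix ι ι ℂ, (∀ x, (ξᴴ * L x).trace = 0) → ξ = 0) :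
    Function.Surjective L := by
  rw [← LinearMap.range_eq_top]
  by_contra hne
  obtain ⟨φ, hφ, hle⟩ := Submodule.exists_le_ker_of_lt_top _ (lt_top_iff_ne_top.2 hne)
  have hφX : ∀ X : Matrix ι ι ℂ, φ X = ∑ i, ∑ j, φ (Matrix.single i j 1) * X i j := by
    intro X
    conv_lhs => rw [Matrix.matrix_eq_sum_single X]
    simp only [map_sum]
    refine Finset.sum_congr rfl fun i _ => Finset.sum_congr rfl fun j _ => ?_
    rw [show Matrix.single i j (X i j) = X i j • Matrix.single i j (1 : ℂ) by
      simp [Matrix.smul_single], map_smul, smul_eq_mul, mul_comm]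
  have h0 := h (Matrix.of fun i j => star (φ (Matrix.single i j 1))) (fun x => by
    have : φ (L x) = 0 := hle ⟨x, rfl⟩
    rw [hφX] at this
    simpa [Matrix.trace_conjTranspose_mul_eq_sum] using this)
  refine hφ (LinearMap.ext fun X => ?_)
  rw [hφX, LinearMap.zero_apply]
  refine Finset.sum_eq_zero fun i _ => Finset.sum_eq_zero fun j _ => ?_
  have := congrFun (congrFun h0 i) j
  simp only [Matrix.of_apply, Matrix.zero_apply, star_eq_zero] at this
  rw [this, zero_mul]

attribute [local instance] Matrix.linftyOpNormedRing Matrix.linftyOpNormedAlgebra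

theorem Matrix.range_mask_mul_mem_nhds (P₁ P₂ P₃ : ι → ι → Prop) (χ : Matrix ι ι ℂ)
    (hχ : ∀ i j, ¬ P₂ i j → χ i j = 0) (h₁ : ∀ i, P₁ i i) (h₃ : ∀ i, P₃ i i)
    (hsurj : ∀ ξ : Matrix ι ι ℂ, (∀ i j, P₂ i j → ξ i j = 0) →
      (∀ i j, P₁ i j → (ξ * χᴴ) i j = 0) → (∀ i j, P₃ i j → (χᴴ * ξ) i j = 0) → ξ = 0) :
    Set.range (fun X : Matrix ι ι ℂ × Matrix ι ι ℂ × Matrix ι ι ℂ =>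
      maskEntries P₁ X.1 * maskEntries P₂ X.2.1 * maskEntries P₃ X.2.2) ∈ nhds χ := by
  let E := Matrix ι ι ℂ × Matrix ι ι ℂ × Matrix ι ι ℂ
  let L₁ : E →L[ℂ] Matrix ι ι ℂ :=
    (LinearMap.toContinuousLinearMap (maskLinear P₁)).comp (ContinuousLinearMap.fst ℂ _ _)
  let L₂ : E →L[ℂ] Matrix ι ι ℂ :=
    (LinearMap.toContinuousLinearMap (maskLinear P₂)).comp
      ((ContinuousLinearMap.fst ℂ _ _).comp (ContinuousLinearMap.snd ℂ _ _))
  let L₃ : E →L[ℂ] Matrix ι ι ℂ :=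
    (LinearMap.toContinuousLinearMap (maskLinear P₃)).comp
      ((ContinuousLinearMap.snd ℂ _ _).comp (ContinuousLinearMap.snd ℂ _ _))
  have e₁ : ∀ X : E, L₁ X = maskEntries P₁ X.1 := fun X => rfl
  have e₂ : ∀ X : E, L₂ X = maskEntries P₂ X.2.1 := fun X => rfl
  have e₃ : ∀ X : E, L₃ X = maskEntries P₃ X.2.2 := fun X => rfl
  let x₀ : E := (1, χ, 1)
  have hx₁ : L₁ x₀ = 1 := by rw [e₁, maskEntries_one h₁]
  have hx₂ : L₂ x₀ = χ := by rw [e₂, maskEntries_eq_self hχ]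
  have hx₃ : L₃ x₀ = 1 := by rw [e₃, maskEntries_one h₃]
  obtain ⟨L, hL, hLX⟩ : ∃ L : E →L[ℂ] Matrix ι ι ℂ,
      HasStrictFDerivAt (fun X : E => L₁ X * L₂ X * L₃ X) L x₀ ∧
      ∀ X, L X = L₁ X * χ + L₂ X + χ * L₃ X := by
    refine ⟨_, ((L₁.hasStrictFDerivAt (x := x₀)).mul' (L₂.hasStrictFDerivAt (x := x₀))).mul'
      (L₃.hasStrictFDerivAt (x := x₀)), fun X => ?_⟩
    change (L₁ x₀ * L₂ x₀) * L₃ X + (L₁ x₀ * L₂ X + L₁ X * L₂ x₀) * L₃ x₀ = _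
    rw [hx₁, hx₂, hx₃]
    simp only [one_mul, mul_one]
    abel
  have hsur : Function.Surjective (L : E →ₗ[ℂ] Matrix ι ι ℂ) := by
    refine Matrix.linearMap_surjective_of_orthogonal _ fun ξ hξ => hsurj ξ ?_ ?_ ?_
    · intro i j hij
      have := hξ (0, Matrix.single i j 1, 0)
      rw [ContinuousLinearMap.coe_coe, hLX, e₁, e₂, e₃, maskEntries_single hij, maskEntries_zero,
        maskEntries_zero, zero_mul, mul_zero, zero_add, add_zero,
        Matrix.trace_conjTranspose_mul_single] at this
      exact star_eq_zero.1 this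
    · intro i j hij
      have := hξ (Matrix.single i j 1, 0, 0)
      rw [ContinuousLinearMap.coe_coe, hLX, e₁, e₂, e₃] at this
      dsimp only at this
      rw [maskEntries_single hij, maskEntries_zero, maskEntries_zero, mul_zero, add_zero, add_zero,
        ← mul_assoc, Matrix.trace_mul_comm, ← mul_assoc,
        show χ * ξᴴ = (ξ * χᴴ)ᴴ by simp, Matrix.trace_conjTranspose_mul_single] at this
      exact star_eq_zero.1 this
    · intro i j hij
      have := hξ (0, 0, Matrix.single i j 1)
      rw [ContinuousLinearMap.coe_coe, hLX, e₁, e₂, e₃, maskEntries_single hij,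
        maskEntries_zero, maskEntries_zero, zero_mul, zero_add, zero_add, ← mul_assoc,
        show ξᴴ * χ = (χᴴ * ξ)ᴴ by simp, Matrix.trace_conjTranspose_mul_single] at this
      exact star_eq_zero.1 this
  have hmap := hL.map_nhds_eq_of_surj (LinearMap.range_eq_top.2 hsur)
  have hF : L₁ x₀ * L₂ x₀ * L₃ x₀ = χ := by simp [hx₁, hx₂, hx₃]
  rw [hF] at hmap
  exact (Filter.ext_iff.1 hmap _).1 Filter.range_mem_map

/-- A generic matrix with entries outside `P` set to zero. -/
noncomputable def genericMask (P : ι → ι → Prop) (k : Fin 3) :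
    Matrix ι ι (MvPolynomial (Fin 3 × ι × ι) ℂ) :=
  maskEntries P (Matrix.of fun i j => MvPolynomial.X (k, i, j))

theorem Matrix.dense_mask_mul (P₁ P₂ P₃ : ι → ι → Prop) (χ : Matrix ι ι ℂ)
    (hχ : ∀ i j, ¬ P₂ i j → χ i j = 0) (h₁ : ∀ i, P₁ i i) (h₃ : ∀ i, P₃ i i)
    (hsurj : ∀ ξ : Matrix ι ι ℂ, (∀ i j, P₂ i j → ξ i j = 0) →
      (∀ i j, P₁ i j → (ξ * χᴴ) i j = 0) → (∀ i j, P₃ i j → (χᴴ * ξ) i j = 0) → ξ = 0) :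
    DenseRange (fun X : Matrix ι ι ℂ × Matrix ι ι ℂ × Matrix ι ι ℂ =>
      maskEntries P₁ X.1 * maskEntries P₂ X.2.1 * maskEntries P₃ X.2.2) := by
  let Q : Matrix ι ι (MvPolynomial (Fin 3 × ι × ι) ℂ) :=
    genericMask P₁ 0 * genericMask P₂ 1 * genericMask P₃ 2
  let p : ι × ι → MvPolynomial (Fin 3 × ι × ι) ℂ := fun t => Q t.1 t.2
  let F : Matrix ι ι ℂ × Matrix ι ι ℂ × Matrix ι ι ℂ → Matrix ι ι ℂ := fun X =>
      maskEntries P₁ X.1 * maskEntries P₂ X.2.1 * maskEntries P₃ X.2.2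
  let m : (Fin 3 × ι × ι → ℂ) → Fin 3 → Matrix ι ι ℂ := fun x k =>
    Matrix.of fun i j => x (k, i, j)
  have hmask : ∀ (x : Fin 3 × ι × ι → ℂ) (P : ι → ι → Prop) (k : Fin 3),
      (genericMask P k).map (MvPolynomial.eval x) = maskEntries P (m x k) := by
    intro x P k
    ext i j
    by_cases h : P i j <;> simp [genericMask, maskEntries, h, m]
  have hp : ∀ x, (fun t => MvPolynomial.eval x (p t)) =
      fun t : ι × ι => F (m x 0, m x 1, m x 2) t.1 t.2 := by
    intro x
    funext t
    have : Q.map (MvPolynomial.eval x) = F (m x 0, m x 1, m x 2) := by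
      simp only [Q, Matrix.map_mul, hmask, F]
    exact congrFun (congrFun this t.1) t.2
  let e : (ι × ι → ℂ) ≃ₜ Matrix ι ι ℂ :=
    { toFun := fun z => Matrix.of fun i j => z (i, j)
      invFun := fun X t => X t.1 t.2
      left_inv := fun z => rfl
      right_inv := fun X => rfl
      continuous_toFun := by
        refine continuous_matrix fun i j => ?_
        exact continuous_apply _
      continuous_invFun := by
        refine continuous_pi fun t => ?_
        exact continuous_id.matrix_elem t.1 t.2 }
  have hrange : Set.range (fun x t => MvPolynomial.eval x (p t)) = e ⁻¹' Set.range F := by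
    ext z
    constructor
    · rintro ⟨x, rfl⟩
      exact ⟨(m x 0, m x 1, m x 2), by simp only [hp x]; rfl⟩
    · rintro ⟨X, hX⟩
      refine ⟨fun s => (![X.1, X.2.1, X.2.2] s.1) s.2.1 s.2.2, ?_⟩
      simp only [hp]
      change (fun t : ι × ι => F X t.1 t.2) = z
      rw [hX]
      rfl
  have hdense := MvPolynomial.denseRange_of_range_mem_nhds p (e.symm χ) (by
    rw [hrange]
    refine e.continuous.continuousAt.preimage_mem_nhds ?_
    rw [e.apply_symm_apply]
    exact Matrix.range_mask_mul_mem_nhds P₁ P₂ P₃ χ hχ h₁ h₃ hsurj)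
  rw [DenseRange, hrange] at hdense
  rw [DenseRange]
  convert e.surjective.denseRange.dense_image e.continuous hdense using 1
  rw [Set.image_preimage_eq _ e.surjective]

end Density

section Blocks

variable {ι κ : Type*}

/-- `X` has nonzero entries only between indices carrying the same label. -/
def Matrix.BlockSupported (f : ι → κ) (X : Matrix ι ι ℂ) : Prop :=
  ∀ i j, X i j ≠ 0 → f i = f j

namespace Matrix.BlockSupported

variable {f : ι → κ} {X Y : Matrix ι ι ℂ}

theorem zero : BlockSupported f (0 : Matrix ι ι ℂ) := fun _ _ h => absurd rfl h

theorem add (hX : BlockSupported f X) (hY : BlockSupported f Y) : BlockSupported f (X + Y) := by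
  intro i j h
  by_contra hij
  exact h (by rw [Matrix.add_apply, not_not.1 (mt (hX i j) hij), not_not.1 (mt (hY i j) hij),
    add_zero])

theorem neg (hX : BlockSupported f X) : BlockSupported f (-X) :=
  fun i j h => hX i j (by simpa using h)

theorem sub (hX : BlockSupported f X) (hY : BlockSupported f Y) : BlockSupported f (X - Y) :=
  sub_eq_add_neg X Y ▸ hX.add hY.neg

theorem smul {R : Type*} [SMulZeroClass R ℂ] (hX : BlockSupported f X) (r : R) :
    BlockSupported f (r • X) :=
  fun i j h => hX i j fun h0 => h (by rw [Matrix.smul_apply, h0, smul_zero])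

theorem conjTranspose (hX : BlockSupported f X) : BlockSupported f Xᴴ :=
  fun i j h => (hX j i (by simpa using h)).symm

theorem mul [Fintype ι] (hX : BlockSupported f X) (hY : BlockSupported f Y) :
    BlockSupported f (X * Y) := by
  intro i j h
  obtain ⟨k, -, hk⟩ := Finset.exists_ne_zero_of_sum_ne_zero (by rwa [Matrix.mul_apply] at h)
  exact (hX i k (left_ne_zero_of_mul hk)).trans (hY k j (right_ne_zero_of_mul hk))

theorem diagonal [DecidableEq ι] (x : ι → ℂ) : BlockSupported f (Matrix.diagonal x) := by
  intro i j h
  by_contra hij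
  exact h (Matrix.diagonal_apply_ne _ fun h' => hij (h' ▸ rfl))

theorem one [DecidableEq ι] : BlockSupported f (1 : Matrix ι ι ℂ) := by
  rw [← Matrix.diagonal_one]
  exact diagonal _

end Matrix.BlockSupported

theorem Matrix.blockSupported_ofReal_iff [Fintype ι] [DecidableEq ι] {f : ι → ℝ}
    {X : Matrix ι ι ℂ} : X.BlockSupported f ↔
      X * Matrix.diagonal (fun i => (f i : ℂ)) = Matrix.diagonal (fun i => (f i : ℂ)) * X := by
  rw [← Matrix.ext_iff]
  simp only [Matrix.mul_diagonal, Matrix.diagonal_mul]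
  refine forall_congr' fun i => forall_congr' fun j => ⟨fun h => ?_, fun h h0 => ?_⟩
  · by_cases h0 : X i j = 0
    · simp [h0]
    · rw [h h0, mul_comm]
  · rw [mul_comm] at h
    exact_mod_cast (mul_right_cancel₀ h0 h).symm

theorem Matrix.eq_neg_of_anticommute_diagonal [Fintype ι] [DecidableEq ι] {f : ι → ℝ}
    {X : Matrix ι ι ℂ} (h : X * Matrix.diagonal (fun i => (f i : ℂ)) =
      -(Matrix.diagonal (fun i => (f i : ℂ)) * X)) {i j : ι} (hij : X i j ≠ 0) :
    f i = -f j := by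
  have := congrFun (congrFun h i) j
  rw [Matrix.neg_apply, Matrix.mul_diagonal, Matrix.diagonal_mul, mul_comm, ← neg_mul] at this
  have := mul_right_cancel₀ hij this
  have h2 : f j = - f i := by exact_mod_cast this
  linarith

/-- The part of `X` supported on the diagonal blocks cut out by the labelling `f`. -/
noncomputable def Matrix.blockPart (f : ι → κ) (X : Matrix ι ι ℂ) : Matrix ι ι ℂ :=
  maskEntries (fun i j => f i = f j) X

section

variable (f : ι → κ) (X Y : Matrix ι ι ℂ)

theorem Matrix.blockPart_apply_of_eq {f : ι → κ} {i j : ι} (h : f i = f j) :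
    blockPart f X i j = X i j := by simp [blockPart, maskEntries, h]

theorem Matrix.blockPart_apply_of_ne {f : ι → κ} {i j : ι} (h : f i ≠ f j) :
    blockPart f X i j = 0 := by simp [blockPart, maskEntries, h]

theorem Matrix.blockPart_supported : (blockPart f X).BlockSupported f := by
  intro i j h
  by_contra hij
  exact h (blockPart_apply_of_ne X hij)

theorem Matrix.blockPart_eq_self {f : ι → κ} {X : Matrix ι ι ℂ} (h : X.BlockSupported f) :
    blockPart f X = X := by
  refine maskEntries_eq_self fun i j hij => ?_
  by_contra h0
  exact hij (h i j h0)

theorem Matrix.blockPart_neg : blockPart f (-X) = -blockPart f X := by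
  ext i j
  by_cases h : f i = f j <;> simp [blockPart, maskEntries, h]

theorem Matrix.blockPart_conjTranspose : blockPart f Xᴴ = (blockPart f X)ᴴ := by
  ext i j
  by_cases h : f i = f j
  · rw [blockPart_apply_of_eq _ h, Matrix.conjTranspose_apply, Matrix.conjTranspose_apply,
      blockPart_apply_of_eq _ h.symm]
  · rw [blockPart_apply_of_ne _ h, Matrix.conjTranspose_apply,
      blockPart_apply_of_ne _ (Ne.symm h), star_zero]

variable {f X Y} [Fintype ι]

theorem Matrix.blockPart_mul_left (h : X.BlockSupported f) :
    blockPart f (X * Y) = X * blockPart f Y := by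
  ext i j
  by_cases hij : f i = f j
  · rw [blockPart_apply_of_eq _ hij, Matrix.mul_apply, Matrix.mul_apply]
    refine Finset.sum_congr rfl fun k _ => ?_
    by_cases h0 : X i k = 0
    · simp [h0]
    · rw [blockPart_apply_of_eq _ ((h i k h0).symm.trans hij)]
  · rw [blockPart_apply_of_ne _ hij, Matrix.mul_apply, eq_comm]
    refine Finset.sum_eq_zero fun k _ => ?_
    by_cases h0 : X i k = 0
    · simp [h0]
    · rw [blockPart_apply_of_ne _ fun h' => hij ((h i k h0).trans h'), mul_zero]

theorem Matrix.blockPart_mul_right (h : Y.BlockSupported f) :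
    blockPart f (X * Y) = blockPart f X * Y := by
  rw [← Matrix.conjTranspose_inj, ← blockPart_conjTranspose, Matrix.conjTranspose_mul,
    blockPart_mul_left h.conjTranspose, blockPart_conjTranspose, Matrix.conjTranspose_mul]

theorem Matrix.trace_blockPart : (blockPart f X).trace = X.trace :=
  Finset.sum_congr rfl fun _ _ => blockPart_apply_of_eq X rfl

theorem Matrix.trace_mul_blockPart (h : X.BlockSupported f) :
    (X * blockPart f Y).trace = (X * Y).trace := by
  rw [← blockPart_mul_left h, trace_blockPart]

end

variable [Fintype ι] [DecidableEq ι]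

/-- A Hermitian matrix respecting a labelling is diagonalised by a unitary respecting it. -/
theorem Matrix.IsHermitian.exists_unitary_blockSupported {f : ι → κ} {X : Matrix ι ι ℂ}
    (hX : X.IsHermitian) (hf : X.BlockSupported f) :
    ∃ (u : Matrix ι ι ℂ) (x : ι → ℝ), u ∈ Matrix.unitaryGroup ι ℂ ∧ u.BlockSupported f ∧
      X = u * Matrix.diagonal (fun i => (x i : ℂ)) * uᴴ := by
  classical
  let e : (Σ l : Set.range f, {i // f i = l}) ≃ ι :=
    { toFun := fun s => s.2
      invFun := fun i => ⟨⟨f i, i, rfl⟩, i, rfl⟩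
      left_inv := by
        rintro ⟨⟨l, hl⟩, i, hi⟩
        cases hi
        rfl
      right_inv := fun _ => rfl }
  let X' : ∀ l : Set.range f, Matrix {i // f i = l} {i // f i = l} ℂ :=
    fun l => X.submatrix Subtype.val Subtype.val
  have hX' : ∀ l, (X' l).IsHermitian := fun l => hX.submatrix _
  have heq : X.submatrix e e = Matrix.blockDiagonal' X' := by
    ext ⟨l, i⟩ ⟨l', j⟩
    by_cases h : l = l'
    · subst h
      simp [X', e]
    · rw [Matrix.blockDiagonal'_apply_ne _ _ _ h]
      by_contra h0
      have := hf _ _ h0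
      exact h (Subtype.ext (i.2.symm.trans (this.trans j.2)))
  let U : Matrix (Σ l : Set.range f, {i // f i = l}) (Σ l : Set.range f, {i // f i = l}) ℂ :=
    Matrix.blockDiagonal' fun l => ((hX' l).eigenvectorUnitary : Matrix _ _ ℂ)
  have hUne : ∀ s s', s.1 ≠ s'.1 → U s s' = 0 := by
    rintro ⟨l, i⟩ ⟨l', j⟩ h
    exact Matrix.blockDiagonal'_apply_ne _ _ _ h
  let x : (Σ l : Set.range f, {i // f i = l}) → ℝ := fun s => (hX' s.1).eigenvalues s.2
  have hU : U * Uᴴ = 1 := by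
    simp only [U]
    rw [Matrix.blockDiagonal'_conjTranspose, ← Matrix.blockDiagonal'_mul,
      ← Matrix.blockDiagonal'_one]
    congr 1
    funext l
    exact Unitary.mul_star_self_of_mem (hX' l).eigenvectorUnitary.2
  have hUX : X.submatrix e e = U * Matrix.diagonal (fun s => (x s : ℂ)) * Uᴴ := by
    rw [heq]
    have : Matrix.diagonal (fun s => (x s : ℂ)) = Matrix.blockDiagonal' fun l =>
        Matrix.diagonal fun i => ((hX' l).eigenvalues i : ℂ) := by
      rw [Matrix.blockDiagonal'_diagonal]
    rw [this]
    simp only [U]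
    rw [Matrix.blockDiagonal'_conjTranspose, ← Matrix.blockDiagonal'_mul,
      ← Matrix.blockDiagonal'_mul]
    congr 1
    funext l
    have := (hX' l).spectral_theorem
    rw [Unitary.conjStarAlgAut_apply] at this
    exact this
  refine ⟨U.submatrix e.symm e.symm, x ∘ e.symm, ?_, ?_, ?_⟩
  · rw [Matrix.mem_unitaryGroup_iff, Matrix.star_eq_conjTranspose, Matrix.conjTranspose_submatrix,
      Matrix.submatrix_mul_equiv, hU, Matrix.submatrix_one_equiv]
  · intro i j h
    by_contra hij
    have h' : (e.symm i).1 ≠ (e.symm j).1 := fun h' => hij (congrArg Subtype.val h')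
    exact h (hUne _ _ h')
  · have := congrArg (fun Z => Matrix.submatrix Z e.symm e.symm) hUX
    simp only [Matrix.submatrix_submatrix, Equiv.self_comp_symm, Matrix.submatrix_id_id] at this
    rw [this, ← Matrix.submatrix_mul_equiv _ _ _ e.symm, ← Matrix.submatrix_mul_equiv _ _ _ e.symm,
      Matrix.conjTranspose_submatrix, Matrix.submatrix_diagonal_equiv]
    rfl

/-- An even skew-Hermitian solution of `[K, diag m] = θ`, with the resulting second variation. -/
theorem Matrix.exists_even_commutator_eq {J θ : Matrix ι ι ℂ} {m d : ι → ℝ} (hJ : J * J = 1)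
    (hJs : Jᴴ = J)
    (hJm : J * diagonal (fun i => (m i : ℂ)) = -(diagonal (fun i => (m i : ℂ)) * J))
    (hJd : J * diagonal (fun i => (d i : ℂ)) = -(diagonal (fun i => (d i : ℂ)) * J))
    (hJθ : J * θ = -(θ * J)) (hθ : θᴴ = θ) (hθm : ∀ j i, θ j i ≠ 0 → m i ≠ m j) :
    ∃ K : Matrix ι ι ℂ, Kᴴ = -K ∧ J * K = K * J ∧
      K * diagonal (fun i => (m i : ℂ)) - diagonal (fun i => (m i : ℂ)) * K = θ ∧
      (∀ f : ι → κ, J.BlockSupported f → θ.BlockSupported f → K.BlockSupported f) ∧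
      (diagonal (fun i => (d i : ℂ)) * (K * θ - θ * K)).trace =
        ((∑ j, ∑ i, (d j - d i) / (m i - m j) * Complex.normSq (θ j i) : ℝ) : ℂ) := by
  set Mm := diagonal (fun i => (m i : ℂ)) with hMm
  set Dd := diagonal (fun i => (d i : ℂ)) with hDd
  let K₀ : Matrix ι ι ℂ := Matrix.of fun j i => θ j i / ((m i : ℂ) - m j)
  have hθs : ∀ i j, star (θ j i) = θ i j := fun i j => congrFun (congrFun hθ i) j
  have hK₀ : K₀ᴴ = -K₀ := by
    ext i j
    simp only [K₀, Matrix.conjTranspose_apply, Matrix.of_apply, Matrix.neg_apply, star_div₀, hθs]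
    rw [← div_neg, neg_sub]
    simp
  have hK₀m : K₀ * Mm - Mm * K₀ = θ := by
    ext j i
    rw [Matrix.sub_apply, hMm, Matrix.mul_diagonal, Matrix.diagonal_mul]
    simp only [K₀, Matrix.of_apply]
    by_cases h : θ j i = 0
    · simp [h]
    · have : (m i : ℂ) - m j ≠ 0 := by
        rw [sub_ne_zero]
        exact_mod_cast hθm j i h
      field_simp
  have hconj : ∀ Z : Matrix ι ι ℂ, J * Z = -(Z * J) → J * Z * J = -Z := by
    intro Z h
    rw [h, neg_mul, mul_assoc, hJ, mul_one]
  have hJK : (J * K₀ * J) * Mm - Mm * (J * K₀ * J) = θ := by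
    have h1 : J * Mm * J = -Mm := hconj _ hJm
    have h2 : J * θ * J = -θ := hconj _ hJθ
    have h3 : J * Mm = -Mm * J := by rw [hJm, neg_mul]
    have h4 : Mm * J = -(J * Mm) := by rw [hJm, neg_neg]
    calc (J * K₀ * J) * Mm - Mm * (J * K₀ * J)
        = J * K₀ * (J * Mm) - (Mm * J) * K₀ * J := by noncomm_ring
      _ = J * K₀ * (-(Mm * J)) - (-(J * Mm)) * K₀ * J := by rw [hJm, h4, neg_neg]
      _ = - (J * (K₀ * Mm - Mm * K₀) * J) := by noncomm_ring
      _ = θ := by rw [hK₀m, h2, neg_neg]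
  have htr₀ : (Dd * (K₀ * θ - θ * K₀)).trace =
      ((∑ j, ∑ i, (d j - d i) / (m i - m j) * Complex.normSq (θ j i) : ℝ) : ℂ) := by
    have e1 : (Dd * (K₀ * θ)).trace = ∑ j, ∑ i, (d j : ℂ) * (K₀ j i * θ i j) := by
      simp only [Matrix.trace, Matrix.diag_apply, hDd, Matrix.diagonal_mul]
      simp only [Matrix.mul_apply, Finset.mul_sum]
    have e2 : (Dd * (θ * K₀)).trace = ∑ j, ∑ i, (d i : ℂ) * (K₀ j i * θ i j) := by
      rw [Finset.sum_comm]
      simp only [Matrix.trace, Matrix.diag_apply, hDd, Matrix.diagonal_mul]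
      simp only [Matrix.mul_apply, Finset.mul_sum]
      refine Finset.sum_congr rfl fun _ _ => Finset.sum_congr rfl fun _ _ => ?_
      ring
    rw [mul_sub, Matrix.trace_sub, e1, e2, ← Finset.sum_sub_distrib]
    push_cast
    refine Finset.sum_congr rfl fun j _ => ?_
    rw [← Finset.sum_sub_distrib]
    refine Finset.sum_congr rfl fun i _ => ?_
    rw [← Complex.mul_conj, ← hθs i j]
    simp only [K₀, Matrix.of_apply, starRingEnd_apply]
    ring
  have htrJ : (Dd * ((J * K₀ * J) * θ - θ * (J * K₀ * J))).trace =
      (Dd * (K₀ * θ - θ * K₀)).trace := by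
    have h1 : J * Dd * J = -Dd := hconj _ hJd
    have h4 : θ * J = -(J * θ) := by rw [hJθ, neg_neg]
    calc (Dd * ((J * K₀ * J) * θ - θ * (J * K₀ * J))).trace
        = (Dd * (J * K₀ * (J * θ) - (θ * J) * K₀ * J)).trace := by
          congr 1; noncomm_ring
      _ = ((-Dd * J) * ((K₀ * θ - θ * K₀) * J)).trace := by
          rw [show J * K₀ * (J * θ) = J * K₀ * (-(θ * J)) by rw [hJθ],
            show θ * J * K₀ * J = -(J * θ) * K₀ * J by rw [h4]]
          congr 1; noncomm_ring
      _ = ((J * -Dd * J) * (K₀ * θ - θ * K₀)).trace := by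
          rw [Matrix.trace_mul_comm, Matrix.trace_mul_comm _ (K₀ * θ - θ * K₀)]
          congr 1; noncomm_ring
      _ = _ := by rw [mul_neg, neg_mul, h1, neg_neg]
  refine ⟨(1 / 2 : ℂ) • (K₀ + J * K₀ * J), ?_, ?_, ?_, ?_, ?_⟩
  · rw [Matrix.conjTranspose_smul, Matrix.conjTranspose_add, Matrix.conjTranspose_mul,
      Matrix.conjTranspose_mul, hJs, hK₀, ← smul_neg]
    congr 1
    · simp
    · noncomm_ring
  · rw [mul_smul_comm, smul_mul_assoc]
    congr 1
    rw [mul_add, add_mul, mul_assoc _ J J, hJ, mul_one, ← mul_assoc, ← mul_assoc, hJ, one_mul,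
      add_comm]
  · rw [mul_smul_comm, smul_mul_assoc, ← smul_sub, add_mul, mul_add, add_sub_add_comm, hK₀m, hJK,
      ← two_smul ℂ, smul_smul]
    norm_num
  · intro f hJf hθf
    have hKf : K₀.BlockSupported f := fun j i h => hθf j i fun h0 => h (by simp [K₀, h0])
    exact (hKf.add ((hJf.mul hKf).mul hJf)).smul _
  · rw [mul_smul_comm, smul_mul_assoc, ← smul_sub, add_mul, mul_add, add_sub_add_comm,
      mul_smul_comm, mul_add, Matrix.trace_smul, Matrix.trace_add, htrJ, htr₀, smul_eq_mul]
    ring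

end Blocks

theorem HasDerivAt.nonneg_of_forall_le {φ ψ : ℝ → ℝ} {b : ℝ}
    (hφ : ∀ x, HasDerivAt φ (ψ x) x) (hψ : HasDerivAt ψ b 0) (hmin : ∀ x, φ 0 ≤ φ x) :
    ψ 0 = 0 ∧ 0 ≤ b := by
  have h0 : ψ 0 = 0 :=
    (IsLocalMin.hasDerivAt_eq_zero (Filter.Eventually.of_forall hmin) (hφ 0))
  refine ⟨h0, ?_⟩
  by_contra! hb
  have hderiv : _root_.deriv φ = ψ := funext fun x => HasDerivAt.deriv (hφ x)
  have hmax : IsLocalMax φ 0 := by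
    refine isLocalMax_of_deriv_deriv_neg ?_ (by rw [hderiv, h0]) (hφ 0).continuousAt
    rw [hderiv, hψ.deriv]
    exact hb
  have hconst : φ =ᶠ[nhds 0] fun _ => φ 0 := by
    filter_upwards [hmax] with x hx
    exact le_antisymm hx (hmin x)
  have h1 : ψ =ᶠ[nhds 0] fun _ => 0 := by
    have := hconst.deriv
    rw [hderiv] at this
    filter_upwards [this] with x hx
    rw [hx, deriv_const]
  have h2 := h1.deriv_eq
  rw [hψ.deriv, deriv_const] at h2
  exact hb.ne h2

section Variation

open NormedSpace

variable {𝔸 : Type*} [NormedRing 𝔸] [NormedAlgebra ℝ 𝔸] [CompleteSpace 𝔸]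

theorem hasDerivAt_conj_exp_smul (K M : 𝔸) (x : ℝ) :
    HasDerivAt (fun y : ℝ => exp (y • K) * M * exp (-(y • K)))
      (exp (x • K) * (K * M - M * K) * exp (-(x • K))) x := by
  have h1 : HasDerivAt (fun y : ℝ => exp (y • K)) (exp (x • K) * K) x :=
    hasDerivAt_exp_smul_const K x
  have h2 : HasDerivAt (fun y : ℝ => exp (-(y • K))) (-K * exp (-(x • K))) x := by
    have := hasDerivAt_exp_smul_const' (-K) x
    simpa only [smul_neg] using this
  refine ((h1.mul_const M).mul h2).congr_deriv ?_
  noncomm_ring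

/-- First and second variation of a squared distance between two conjugation orbits. -/
theorem conj_exp_smul_variation [FiniteDimensional ℝ 𝔸] (τ : 𝔸 → ℝ) (hτ : IsLinearMap ℝ τ)
    (hτc : ∀ X Y, τ (X * Y) = τ (Y * X)) (π : 𝔸 → 𝔸) (hπ : IsLinearMap ℝ π) (A M K H : 𝔸)
    (hmin : ∀ x : ℝ, τ ((A - π M) * (A - π M)) ≤
      τ ((exp (x • H) * A * exp (-(x • H)) - π (exp (x • K) * M * exp (-(x • K)))) *
        (exp (x • H) * A * exp (-(x • H)) - π (exp (x • K) * M * exp (-(x • K)))))) :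
    τ ((A - π M) * ((H * A - A * H) - π (K * M - M * K))) = 0 ∧
    (H * A - A * H = π (K * M - M * K) →
      0 ≤ τ ((A - π M) * ((H * (H * A - A * H) - (H * A - A * H) * H) -
        π (K * (K * M - M * K) - (K * M - M * K) * K)))) := by
  let E : 𝔸 → 𝔸 → ℝ → 𝔸 := fun A M x =>
    exp (x • H) * A * exp (-(x • H)) - π (exp (x • K) * M * exp (-(x • K)))
  let π' : 𝔸 →L[ℝ] 𝔸 := LinearMap.toContinuousLinearMap (hπ.mk' π)
  let τ' : 𝔸 →L[ℝ] ℝ := LinearMap.toContinuousLinearMap (hτ.mk' τ)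
  have hE : ∀ A M x, HasDerivAt (E A M) (E (H * A - A * H) (K * M - M * K) x) x := fun A M x =>
    (hasDerivAt_conj_exp_smul H A x).sub
      (π'.hasFDerivAt.comp_hasDerivAt x (hasDerivAt_conj_exp_smul K M x))
  have hE0 : ∀ A M, E A M 0 = A - π M := fun A M => by
    simp only [E, zero_smul, neg_zero, exp_zero, one_mul, mul_one]
  have hφ : ∀ x, HasDerivAt (fun x => τ (E A M x * E A M x))
      (2 * τ (E A M x * E (H * A - A * H) (K * M - M * K) x)) x := by
    intro x
    refine (τ'.hasFDerivAt.comp_hasDerivAt x ((hE A M x).mul (hE A M x))).congr_deriv ?_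
    rw [map_add, two_mul]
    exact congrArg₂ (· + ·) (hτc _ _) rfl
  have hψ : HasDerivAt (fun x => 2 * τ (E A M x * E (H * A - A * H) (K * M - M * K) x)) _ 0 :=
    (τ'.hasFDerivAt.comp_hasDerivAt (0 : ℝ) ((hE A M 0).mul (hE _ _ 0))).const_mul 2
  obtain ⟨h1, h2⟩ := HasDerivAt.nonneg_of_forall_le hφ hψ (fun x => by
    rw [hE0]
    exact hmin x)
  rw [hE0, hE0] at h1
  refine ⟨by linarith, fun heq => ?_⟩
  rw [hE0, hE0, hE0, heq, sub_self, zero_mul, zero_add] at h2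
  rw [heq]
  exact nonneg_of_mul_nonneg_right h2 two_pos

end Variation

section MatrixVariation

variable {ι κ : Type*} [Fintype ι] [DecidableEq ι]

theorem Matrix.exp_smul_unitary {J K : Matrix ι ι ℂ} (hK : Kᴴ = -K) (hJK : J * K = K * J)
    (x : ℝ) : NormedSpace.exp (x • K) ∈ Matrix.unitaryGroup ι ℂ ∧
      J * NormedSpace.exp (x • K) = NormedSpace.exp (x • K) * J ∧
      (NormedSpace.exp (x • K))ᴴ = NormedSpace.exp (-(x • K)) := by
  have hs : (NormedSpace.exp (x • K))ᴴ = NormedSpace.exp (-(x • K)) := by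
    rw [← Matrix.exp_conjTranspose, Matrix.conjTranspose_smul, hK]
    simp
  refine ⟨?_, ?_, hs⟩
  · rw [Matrix.mem_unitaryGroup_iff, Matrix.star_eq_conjTranspose, hs,
      ← Matrix.exp_add_of_commute _ _ ((Commute.refl (x • K)).neg_right), add_neg_cancel,
      NormedSpace.exp_zero]
  · have : Commute J K := hJK
    exact (this.smul_right x).exp_right

theorem Matrix.BlockSupported.exp_smul {f : ι → κ} {H : Matrix ι ι ℂ} (hH : H.BlockSupported f)
    (x : ℝ) : (NormedSpace.exp (x • H)).BlockSupported f := by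
  classical
  let n : Set.range f → ℕ := fun l => Fintype.equivFin (Set.range f) l
  have hn : Function.Injective n := fun a b h =>
    (Fintype.equivFin (Set.range f)).injective (Fin.ext h)
  let g : ι → ℝ := fun i => n ⟨f i, Set.mem_range_self i⟩
  have hg : ∀ i j, g i = g j ↔ f i = f j := by
    intro i j
    refine ⟨fun h => ?_, fun h => ?_⟩
    · exact congrArg Subtype.val (hn (Nat.cast_injective h))
    · simp only [g, h]
  have h : ∀ Z : Matrix ι ι ℂ, Z.BlockSupported f ↔ Z.BlockSupported g := fun Z =>
    forall_congr' fun i => forall_congr' fun j => by rw [hg]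
  rw [h] at hH ⊢
  rw [Matrix.blockSupported_ofReal_iff] at hH ⊢
  have : Commute (Matrix.diagonal fun i => (g i : ℂ)) H := hH.symm
  exact ((this.smul_right x).exp_right).eq.symm

section

attribute [local instance] Matrix.linftyOpNormedRing Matrix.linftyOpNormedAlgebra

/-- First and second variation of the distance from `h A hᴴ` to the block part of `k M kᴴ`. -/
theorem Matrix.commutator_variation {c : ι → κ} {J M A D : Matrix ι ι ℂ}
    (hD : D = A - blockPart c M)
    (hmin : ∀ k ∈ Matrix.unitaryGroup ι ℂ, ∀ h ∈ Matrix.unitaryGroup ι ℂ, J * k = k * J →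
      J * h = h * J → h.BlockSupported c → (D * D).trace.re ≤
        ((h * A * hᴴ - blockPart c (k * M * kᴴ)) *
          (h * A * hᴴ - blockPart c (k * M * kᴴ))).trace.re)
    {K H : Matrix ι ι ℂ} (hK : Kᴴ = -K) (hH : Hᴴ = -H) (hJK : J * K = K * J)
    (hJH : J * H = H * J) (hHc : H.BlockSupported c) :
    (D * ((H * A - A * H) - blockPart c (K * M - M * K))).trace.re = 0 ∧
    (H * A - A * H = blockPart c (K * M - M * K) →
      0 ≤ (D * ((H * (H * A - A * H) - (H * A - A * H) * H) -
        blockPart c (K * (K * M - M * K) - (K * M - M * K) * K))).trace.re) := by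
  have hlin : IsLinearMap ℝ (fun X : Matrix ι ι ℂ => X.trace.re) :=
    ((Complex.reLm.comp ((Matrix.traceLinearMap ι ℂ ℂ).restrictScalars ℝ))).isLinear
  have hπ : IsLinearMap ℝ (blockPart c : Matrix ι ι ℂ → Matrix ι ι ℂ) :=
    ((maskLinear fun i j => c i = c j).restrictScalars ℝ).isLinear
  have key := conj_exp_smul_variation (fun X : Matrix ι ι ℂ => X.trace.re) hlin
    (fun X Y => congrArg Complex.re (Matrix.trace_mul_comm X Y)) (blockPart c) hπ A M K H
    (fun x => by
      have h1 := exp_smul_unitary hK hJK x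
      have h2 := exp_smul_unitary hH hJH x
      have := hmin _ h1.1 _ h2.1 h1.2.1 h2.2.1 (hHc.exp_smul x)
      rw [h1.2.2, h2.2.2, hD] at this
      exact this)
  rw [hD]
  exact key

end

open scoped ComplexOrder in
theorem Matrix.commute_of_min {c : ι → κ} {J M A D : Matrix ι ι ℂ}
    (hM : Mᴴ = M) (hA : Aᴴ = A) (hJM : J * M = -(M * J)) (hJA : J * A = -(A * J))
    (hJD : J * D = -(D * J)) (hDs : Dᴴ = D)
    (hAc : A.BlockSupported c) (hDc : D.BlockSupported c)
    (hvar : ∀ {K H : Matrix ι ι ℂ}, Kᴴ = -K → Hᴴ = -H → J * K = K * J → J * H = H * J →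
      H.BlockSupported c →
      (D * ((H * A - A * H) - blockPart c (K * M - M * K))).trace.re = 0) :
    M * D = D * M ∧ A * D = D * A := by
  have key : ∀ X : Matrix ι ι ℂ, Xᴴ = X → J * X = -(X * J) →
      (X * D - D * X)ᴴ = -(X * D - D * X) ∧ J * (X * D - D * X) = (X * D - D * X) * J ∧
      ((D * ((X * D - D * X) * X - X * (X * D - D * X))).trace.re = 0 → X * D = D * X) := by
    intro X hX hJX
    have hs : (X * D - D * X)ᴴ = -(X * D - D * X) := by
      rw [Matrix.conjTranspose_sub, Matrix.conjTranspose_mul, Matrix.conjTranspose_mul, hX, hDs]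
      abel
    refine ⟨hs, ?_, fun h => ?_⟩
    · calc J * (X * D - D * X) = (J * X) * D - (J * D) * X := by noncomm_ring
        _ = D * (J * X) - X * (J * D) := by
          rw [hJX, hJD, neg_mul, neg_mul, mul_assoc, mul_assoc, hJX, hJD]; noncomm_ring
        _ = (X * D - D * X) * J := by rw [hJX, hJD]; noncomm_ring
    · have : (D * ((X * D - D * X) * X - X * (X * D - D * X))).trace =
          -((X * D - D * X)ᴴ * (X * D - D * X)).trace := by
        rw [hs]
        have e1 : (D * ((X * D - D * X) * X)).trace = (X * D * (X * D - D * X)).trace := by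
          rw [← mul_assoc, Matrix.trace_mul_comm, ← mul_assoc]
        rw [mul_sub, Matrix.trace_sub, e1, ← Matrix.trace_sub, ← Matrix.trace_neg]
        congr 1
        noncomm_ring
      rw [this, Complex.neg_re, neg_eq_zero] at h
      have hz : ((X * D - D * X)ᴴ * (X * D - D * X)).trace = 0 := by
        refine Complex.ext h ?_
        exact (Complex.nonneg_iff.1
          (Matrix.posSemidef_conjTranspose_mul_self (X * D - D * X)).trace_nonneg).2.symm
      exact sub_eq_zero.1 (Matrix.trace_conjTranspose_mul_self_eq_zero_iff.1 hz)
  constructor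
  · obtain ⟨h1, h2, h3⟩ := key M hM hJM
    refine h3 ?_
    have := hvar h1 (H := 0) (by simp) h2 (by simp) BlockSupported.zero
    rw [zero_mul, mul_zero, sub_self, zero_sub, mul_neg, Matrix.trace_neg,
      trace_mul_blockPart hDc, Complex.neg_re, neg_eq_zero] at this
    exact this
  · obtain ⟨h1, h2, h3⟩ := key A hA hJA
    refine h3 ?_
    have := hvar (K := 0) (by simp) h1 (by simp) h2 ((hAc.mul hDc).sub (hDc.mul hAc))
    rwa [zero_mul, mul_zero, sub_self, blockPart_eq_self BlockSupported.zero, sub_zero] at this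

end MatrixVariation

section Isometries

variable {ι ρ : Type*} [Fintype ι] [Fintype ρ] [DecidableEq ι] [DecidableEq ρ]

omit [Fintype ρ] [DecidableEq ι] in
theorem Matrix.sum_normSq_of_isometry {W : Matrix ι ρ ℂ} (hW : Wᴴ * W = 1) (i : ρ) :
    ∑ j, Complex.normSq (W j i) = 1 := by
  have h := congrFun (congrFun hW i) i
  rw [Matrix.mul_apply, Matrix.one_apply_eq] at h
  have : ((∑ j, Complex.normSq (W j i) : ℝ) : ℂ) = 1 := by
    rw [← h]
    push_cast
    refine Finset.sum_congr rfl fun j _ => ?_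
    rw [Complex.normSq_eq_conj_mul_self, Matrix.conjTranspose_apply, starRingEnd_apply]
  exact_mod_cast this

omit [DecidableEq ι] [Fintype ρ] in
theorem Matrix.isCompact_isometries : IsCompact {W : Matrix ι ρ ℂ | Wᴴ * W = 1} := by
  have hK : IsCompact (Set.univ.pi fun _ : ι => Set.univ.pi fun _ : ρ =>
      Metric.closedBall (0 : ℂ) 1) :=
    isCompact_univ_pi fun _ => isCompact_univ_pi fun _ => isCompact_closedBall _ _
  refine IsCompact.of_isClosed_subset (s := (Set.univ.pi fun _ : ι => Set.univ.pi fun _ : ρ =>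
      Metric.closedBall (0 : ℂ) 1 : Set (Matrix ι ρ ℂ))) hK ?_ ?_
  · exact isClosed_eq (continuous_id.matrix_conjTranspose.matrix_mul continuous_id)
      continuous_const
  · intro W hW j _ i _
    rw [mem_closedBall_zero_iff, ← sq_le_one_iff₀ (norm_nonneg _), ← Complex.normSq_eq_norm_sq,
      ← Matrix.sum_normSq_of_isometry hW i]
    exact Finset.single_le_sum (f := fun j => Complex.normSq (W j i))
      (fun j _ => Complex.normSq_nonneg _) (Finset.mem_univ j)

omit [DecidableEq ρ] in
theorem Matrix.trace_conjTranspose_diagonal_mul_re (m : ι → ℝ) (W : Matrix ι ρ ℂ) :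
    (Wᴴ * diagonal (fun i => (m i : ℂ)) * W).trace.re =
      ∑ i, ∑ j, m j * Complex.normSq (W j i) := by
  have : (Wᴴ * diagonal (fun i => (m i : ℂ)) * W).trace =
      ((∑ i, ∑ j, m j * Complex.normSq (W j i) : ℝ) : ℂ) := by
    simp only [Matrix.trace, Matrix.diag_apply]
    push_cast
    refine Finset.sum_congr rfl fun i _ => ?_
    rw [Matrix.mul_assoc, Matrix.mul_apply]
    refine Finset.sum_congr rfl fun j _ => ?_
    rw [Complex.normSq_eq_conj_mul_self, Matrix.conjTranspose_apply, Matrix.diagonal_mul,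
      starRingEnd_apply]
    ring
  rw [this, Complex.ofReal_re]

theorem Matrix.trace_isometry_le {m : ι → ℝ} {e : ρ → ι} {W : Matrix ι ρ ℂ} (hW : Wᴴ * W = 1)
    (h : ∀ j i, m (e i) < m j → W j i = 0) :
    (Wᴴ * diagonal (fun i => (m i : ℂ)) * W).trace.re ≤ ∑ i, m (e i) := by
  rw [Matrix.trace_conjTranspose_diagonal_mul_re]
  refine Finset.sum_le_sum fun i _ => ?_
  calc ∑ j, m j * Complex.normSq (W j i) ≤ ∑ j, m (e i) * Complex.normSq (W j i) := by
        refine Finset.sum_le_sum fun j _ => ?_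
        by_cases hj : m (e i) < m j
        · simp [h j i hj]
        · exact mul_le_mul_of_nonneg_right (not_lt.1 hj) (Complex.normSq_nonneg _)
    _ = m (e i) := by rw [← Finset.mul_sum, Matrix.sum_normSq_of_isometry hW, mul_one]

theorem Matrix.le_trace_isometry {a : ι → ℝ} {e : ρ → ι} {W : Matrix ι ρ ℂ} (hW : Wᴴ * W = 1)
    (h : ∀ j i, a j < a (e i) → W j i = 0) :
    ∑ i, a (e i) ≤ (Wᴴ * diagonal (fun i => (a i : ℂ)) * W).trace.re := by
  have := Matrix.trace_isometry_le (m := fun i => -a i) (e := e) hW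
    (fun j i hji => h j i (neg_lt_neg_iff.1 hji))
  rw [Matrix.trace_conjTranspose_diagonal_mul_re] at this ⊢
  simp only [neg_mul, Finset.sum_neg_distrib] at this
  linarith

omit [DecidableEq ι] in
open scoped ComplexOrder in
/-- Gram–Schmidt orthonormalisation of the columns of a left-invertible matrix. -/
theorem Matrix.exists_isometry_upperTriangular {r : ℕ} {T : Matrix ι (Fin r) ℂ}
    {L : Matrix (Fin r) ι ℂ} (hL : L * T = 1) :
    ∃ (W : Matrix ι (Fin r) ℂ) (R : Matrix (Fin r) (Fin r) ℂ), Wᴴ * W = 1 ∧ W = T * R ∧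
      (∀ l i, i < l → R l i = 0) ∧ W * Wᴴ * T = T := by
  have hinj : Function.Injective T.mulVec := by
    refine Function.LeftInverse.injective (g := L.mulVec) fun v => ?_
    rw [Matrix.mulVec_mulVec, hL, Matrix.one_mulVec]
  have hS : (Tᴴ * T).PosDef := Matrix.PosDef.conjTranspose_mul_self T hinj
  let N := LDL.lowerInv hS
  have hNdet : IsUnit N := isUnit_of_invertible N
  have hNN : (Nᴴ)ᴴ * (Tᴴ * T) * Nᴴ = LDL.diag hS := by
    rw [Matrix.conjTranspose_conjTranspose]
    exact (LDL.diag_eq_lowerInv_conj hS).symm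
  have hpos : ∀ i, 0 < LDL.diagEntries hS i := by
    have hinj' : Function.Injective (T * Nᴴ).mulVec := by
      intro v w h
      simp only [← Matrix.mulVec_mulVec] at h
      exact Matrix.mulVec_injective_of_isUnit ((Matrix.isUnit_conjTranspose _).2 hNdet) (hinj h)
    have hD : (LDL.diag hS).PosDef := by
      have := Matrix.PosDef.conjTranspose_mul_self (T * Nᴴ) hinj'
      rw [Matrix.conjTranspose_mul] at this
      rw [← hNN]
      convert this using 1
      simp only [Matrix.mul_assoc]
    intro i
    have := hD.diag_pos (i := i)
    rwa [LDL.diag, Matrix.diagonal_apply_eq] at this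
  have hre : ∀ i, LDL.diagEntries hS i = ((LDL.diagEntries hS i).re : ℂ) := fun i =>
    (Complex.ext rfl (Complex.pos_iff.1 (hpos i)).2.symm)
  let δ : Matrix (Fin r) (Fin r) ℂ :=
    diagonal fun i => ((Real.sqrt (LDL.diagEntries hS i).re)⁻¹ : ℝ)
  have hδ : δᴴ = δ := by
    simp only [δ]
    rw [Matrix.diagonal_conjTranspose]
    congr 1
    funext i
    simp
  have hsq : ∀ i, Real.sqrt (LDL.diagEntries hS i).re ^ 2 = (LDL.diagEntries hS i).re := fun i =>
    Real.sq_sqrt (Complex.pos_iff.1 (hpos i)).1.le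
  have hne : ∀ i, Real.sqrt (LDL.diagEntries hS i).re ≠ 0 := fun i =>
    (Real.sqrt_pos.2 (Complex.pos_iff.1 (hpos i)).1).ne'
  have hδδ : δ * LDL.diag hS * δ = 1 := by
    simp only [δ]
    rw [LDL.diag, Matrix.diagonal_mul_diagonal, Matrix.diagonal_mul_diagonal,
      ← Matrix.diagonal_one]
    congr 1
    funext i
    rw [hre i, ← Complex.ofReal_mul, ← Complex.ofReal_mul, ← Complex.ofReal_one]
    congr 1
    have h₁ := hne i
    have h₂ := hsq i
    rw [Complex.ofReal_re]
    generalize Real.sqrt (LDL.diagEntries hS i).re = σ at h₁ h₂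
    rw [← h₂]
    field_simp
  have hδdet : IsUnit δ := by
    rw [Matrix.isUnit_iff_isUnit_det, Matrix.det_diagonal, isUnit_iff_ne_zero,
      Finset.prod_ne_zero_iff]
    intro i _
    exact_mod_cast inv_ne_zero (hne i)
  have hRu : IsUnit (Nᴴ * δ) := ((Matrix.isUnit_conjTranspose _).2 hNdet).mul hδdet
  have hWW : (T * (Nᴴ * δ))ᴴ * (T * (Nᴴ * δ)) = 1 := by
    rw [Matrix.conjTranspose_mul, Matrix.conjTranspose_mul, hδ]
    calc δ * Nᴴᴴ * Tᴴ * (T * (Nᴴ * δ)) = δ * (Nᴴᴴ * (Tᴴ * T) * Nᴴ) * δ := by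
          simp only [Matrix.mul_assoc]
      _ = 1 := by rw [hNN, hδδ]
  refine ⟨T * (Nᴴ * δ), Nᴴ * δ, hWW, rfl, ?_, ?_⟩
  · intro l i h
    simp only [δ]
    rw [Matrix.mul_diagonal]
    change star (LDL.lowerInv hS i l) * _ = 0
    rw [LDL.lowerInv_triangular hS h, star_zero, zero_mul]
  · obtain ⟨Q, hQ⟩ := hRu.exists_right_inv
    have hT : T = (T * (Nᴴ * δ)) * Q := by rw [Matrix.mul_assoc, hQ, Matrix.mul_one]
    generalize T * (Nᴴ * δ) = W at hT hWW
    calc W * Wᴴ * T = W * (Wᴴ * W) * Q := by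
          rw [hT]
          simp only [Matrix.mul_assoc]
      _ = T := by rw [hWW, Matrix.mul_one, ← hT]

end Isometries

section Schubert

variable {ι κ : Type*} [Fintype ι] [DecidableEq ι] {r : ℕ}

theorem Matrix.blockSupported_isometry_mul_conjTranspose {c : ι → κ}
    {T W : Matrix ι (Fin r) ℂ} {R : Matrix (Fin r) (Fin r) ℂ} {e : Fin r → ι}
    (hT : ∀ j i, T j i ≠ 0 → c j = c (e i)) (hW : W = T * R) (hWT : W * Wᴴ * T = T) :
    (W * Wᴴ).BlockSupported c := by
  classical
  intro i j hij
  by_contra hne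
  let C : Matrix ι ι ℂ := diagonal fun l => if c l = c i then 1 else 0
  let Γ : Matrix (Fin r) (Fin r) ℂ := diagonal fun l => if c (e l) = c i then 1 else 0
  have hCC : Cᴴ = C := by
    simp only [C]
    rw [Matrix.diagonal_conjTranspose]
    congr 1
    funext l
    by_cases h : c l = c i <;> simp [h]
  have hCT : C * T = T * Γ := by
    ext l x
    simp only [C, Γ]
    rw [Matrix.diagonal_mul, Matrix.mul_diagonal]
    by_cases h : T l x = 0
    · simp [h]
    · rw [hT l x h, mul_comm]
  have hPCP : W * Wᴴ * C * (W * Wᴴ) = C * (W * Wᴴ) := by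
    calc W * Wᴴ * C * (W * Wᴴ) = W * Wᴴ * (C * T) * (R * Wᴴ) := by
          conv_lhs => enter [2, 1]; rw [hW]
          simp only [Matrix.mul_assoc]
      _ = (W * Wᴴ * T) * Γ * (R * Wᴴ) := by rw [hCT]; simp only [Matrix.mul_assoc]
      _ = C * (W * Wᴴ) := by
          rw [hWT, ← hCT]
          conv_rhs => enter [2, 1]; rw [hW]
          simp only [Matrix.mul_assoc]
  have hPs : (W * Wᴴ)ᴴ = W * Wᴴ := by
    rw [Matrix.conjTranspose_mul, Matrix.conjTranspose_conjTranspose]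
  have hcomm : W * Wᴴ * C = C * (W * Wᴴ) := by
    clear hCT hWT hW
    generalize W * Wᴴ = P at hPCP hPs
    have h := congrArg conjTranspose hPCP
    rw [Matrix.conjTranspose_mul, Matrix.conjTranspose_mul, Matrix.conjTranspose_mul C P,
      hPs, hCC, ← Matrix.mul_assoc, hPCP] at h
    exact h.symm
  have h := congrFun (congrFun hcomm i) j
  simp only [C] at h
  rw [Matrix.mul_diagonal, Matrix.diagonal_mul, if_pos rfl, if_neg fun h' => hne h'.symm,
    mul_zero, one_mul] at h
  exact hij h.symm

/-- The matrices which move some subspace in special position with respect to `m` into a subspace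
in special position with respect to `a` and compatible with the block structure `c`. -/
def Matrix.schubertIncidence (c : ι → κ) (a m : ι → ℝ) (e e' : Fin r → ι) :
    Set (Matrix ι ι ℂ) :=
  {k | ∃ W W' : Matrix ι (Fin r) ℂ, Wᴴ * W = 1 ∧ W'ᴴ * W' = 1 ∧
    (∀ j i, m (e i) < m j → W j i = 0) ∧ (∀ j i, a j < a (e' i) → W' j i = 0) ∧
    (∀ i j, c i ≠ c j → (W' * W'ᴴ) i j = 0) ∧ W' * W'ᴴ * k * W = k * W}

omit [Fintype ι] [DecidableEq ι] in
theorem Matrix.isClosed_entries_eq_zero {α ρ : Type*} [TopologicalSpace α] {f : α → Matrix ι ρ ℂ}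
    (hf : Continuous f) (Q : ι → ρ → Prop) : IsClosed {x | ∀ j i, Q j i → f x j i = 0} := by
  have : {x | ∀ j i, Q j i → f x j i = 0} = ⋂ j, ⋂ i, ⋂ _ : Q j i, {x | f x j i = 0} := by
    ext x
    simp
  rw [this]
  exact isClosed_iInter fun j => isClosed_iInter fun i => isClosed_iInter fun _ =>
    isClosed_eq (hf.matrix_elem j i) continuous_const

omit [DecidableEq ι] in
theorem Matrix.isClosed_schubertIncidence (c : ι → κ) (a m : ι → ℝ) (e e' : Fin r → ι) :
    IsClosed (Matrix.schubertIncidence c a m e e') := by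
  let I : Set (Matrix ι (Fin r) ℂ) := {W | Wᴴ * W = 1}
  have : CompactSpace I := isCompact_iff_compactSpace.1 Matrix.isCompact_isometries
  let F : Set ((I × I) × Matrix ι ι ℂ) := {x |
    (∀ j i, m (e i) < m j → x.1.1.1 j i = 0) ∧ (∀ j i, a j < a (e' i) → x.1.2.1 j i = 0) ∧
    (∀ i j, c i ≠ c j → (x.1.2.1 * x.1.2.1ᴴ) i j = 0) ∧
    x.1.2.1 * x.1.2.1ᴴ * x.2 * x.1.1.1 = x.2 * x.1.1.1}
  have c₁ : Continuous fun x : (I × I) × Matrix ι ι ℂ => x.1.1.1 := by fun_prop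
  have c₂ : Continuous fun x : (I × I) × Matrix ι ι ℂ => x.1.2.1 := by fun_prop
  have c₃ : Continuous fun x : (I × I) × Matrix ι ι ℂ => x.1.2.1 * x.1.2.1ᴴ :=
    c₂.matrix_mul c₂.matrix_conjTranspose
  have hF : IsClosed F :=
    (Matrix.isClosed_entries_eq_zero c₁ fun j i => m (e i) < m j).inter
      ((Matrix.isClosed_entries_eq_zero c₂ fun j i => a j < a (e' i)).inter
      ((Matrix.isClosed_entries_eq_zero c₃ fun i j => c i ≠ c j).inter
      (isClosed_eq ((c₃.matrix_mul continuous_snd).matrix_mul c₁)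
        (continuous_snd.matrix_mul c₁))))
  have himg := isClosedMap_snd_of_compactSpace F hF
  convert himg using 1
  ext k
  constructor
  · rintro ⟨W, W', h₁, h₂, h⟩
    exact ⟨⟨(⟨W, h₁⟩, ⟨W', h₂⟩), k⟩, h, rfl⟩
  · rintro ⟨⟨⟨⟨W, h₁⟩, ⟨W', h₂⟩⟩, k'⟩, h, rfl⟩
    exact ⟨W, W', h₁, h₂, h⟩

theorem Matrix.sum_le_sum_of_mem_schubertIncidence {c : ι → κ} {a m : ι → ℝ} {e e' : Fin r → ι}
    {k : Matrix ι ι ℂ} (hk : kᴴ * k = 1) (h : k ∈ Matrix.schubertIncidence c a m e e')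
    (hka : Matrix.blockPart c (k * diagonal (fun i => (m i : ℂ)) * kᴴ) =
      diagonal fun i => (a i : ℂ)) :
    ∑ i, a (e' i) ≤ ∑ i, m (e i) := by
  obtain ⟨W, W', hW, hW', hWm, hWa, hWc, hWk⟩ := h
  refine (Matrix.le_trace_isometry hW' hWa).trans (le_trans (le_of_eq ?_)
    (Matrix.trace_isometry_le hW hWm))
  congr 1
  set Y := W'ᴴ * k * W with hY
  have hWY : W' * Y = k * W := by rw [← hWk, hY]; simp only [Matrix.mul_assoc]
  clear_value Y
  have hYY : Yᴴ * Y = 1 := by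
    calc Yᴴ * Y = Yᴴ * (W'ᴴ * W') * Y := by rw [hW', Matrix.mul_one]
      _ = (W' * Y)ᴴ * (W' * Y) := by
          rw [Matrix.conjTranspose_mul]; simp only [Matrix.mul_assoc]
      _ = Wᴴ * (kᴴ * k) * W := by
          rw [hWY, Matrix.conjTranspose_mul]; simp only [Matrix.mul_assoc]
      _ = 1 := by rw [hk, Matrix.mul_one, hW]
  have hYY' : Y * Yᴴ = 1 := mul_eq_one_comm.1 hYY
  have hP : W' * W'ᴴ = k * W * (Wᴴ * kᴴ) := by
    calc W' * W'ᴴ = W' * (Y * Yᴴ) * W'ᴴ := by rw [hYY', Matrix.mul_one]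
      _ = (W' * Y) * (W' * Y)ᴴ := by
          rw [Matrix.conjTranspose_mul]; simp only [Matrix.mul_assoc]
      _ = _ := by rw [hWY, Matrix.conjTranspose_mul]
  have hPs : (W' * W'ᴴ).BlockSupported c := fun i j hij => by
    by_contra hne
    exact hij (hWc i j hne)
  calc (W'ᴴ * diagonal (fun i => (a i : ℂ)) * W').trace
      = (W' * W'ᴴ * diagonal (fun i => (a i : ℂ))).trace := by
        rw [Matrix.mul_assoc, Matrix.trace_mul_comm, Matrix.mul_assoc,
          Matrix.trace_mul_comm]
    _ = (W' * W'ᴴ * (k * diagonal (fun i => (m i : ℂ)) * kᴴ)).trace := by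
        rw [← hka, Matrix.trace_mul_blockPart hPs]
    _ = ((k * W) * (Wᴴ * (kᴴ * k) * diagonal (fun i => (m i : ℂ)) * kᴴ)).trace := by
        rw [hP]; simp only [Matrix.mul_assoc]
    _ = (Wᴴ * diagonal (fun i => (m i : ℂ)) * (kᴴ * k) * W).trace := by
        rw [hk, Matrix.trace_mul_comm, Matrix.mul_one]
        conv_rhs => rw [← hk]
        simp only [Matrix.mul_assoc]
    _ = _ := by rw [hk, Matrix.mul_one]

theorem Matrix.mul_mem_schubertIncidence {c : ι → κ} {a m : ι → ℝ} {e e' : Fin r → ι}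
    (he : Monotone (m ∘ e)) (he' : Antitone (a ∘ e')) (hinj : Function.Injective e)
    (hinj' : Function.Injective e') {β' χ β : Matrix ι ι ℂ}
    (hβ' : ∀ j i, β' j i ≠ 0 → c j = c i ∧ a i ≤ a j)
    (hχ : ∀ j i, j ∉ Set.range e' → χ j (e i) = 0) (hβ : ∀ j i, β j i ≠ 0 → m j ≤ m i)
    (hdet : (β' * χ * β).det ≠ 0) :
    β' * χ * β ∈ Matrix.schubertIncidence c a m e e' := by
  have hdβ : IsUnit β.det := by
    rw [isUnit_iff_ne_zero]
    intro h
    rw [Matrix.det_mul, h, mul_zero] at hdet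
    exact hdet rfl
  have hdβ' : IsUnit β'.det := by
    rw [isUnit_iff_ne_zero]
    intro h
    rw [Matrix.det_mul, Matrix.det_mul, h, zero_mul, zero_mul] at hdet
    exact hdet rfl
  let _ := β.invertibleOfIsUnitDet hdβ
  have hβi : ∀ j i, β⁻¹ j i ≠ 0 → m j ≤ m i := by
    have hb : β.BlockTriangular m := fun i j hij => by
      by_contra h
      exact absurd (hβ i j h) (not_le.2 hij)
    intro j i h
    by_contra hlt
    exact h (Matrix.blockTriangular_inv_of_blockTriangular hb (not_le.1 hlt))
  have hL : β.submatrix e id * β⁻¹.submatrix id e = 1 := by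
    rw [← Matrix.submatrix_mul _ _ e id e Function.bijective_id, Matrix.mul_nonsing_inv _ hdβ,
      Matrix.submatrix_one e hinj]
  have hL' : β'⁻¹.submatrix e' id * β'.submatrix id e' = 1 := by
    rw [← Matrix.submatrix_mul _ _ e' id e' Function.bijective_id, Matrix.nonsing_inv_mul _ hdβ',
      Matrix.submatrix_one e' hinj']
  obtain ⟨W, R, hW, hWR, hR, -⟩ := Matrix.exists_isometry_upperTriangular hL
  obtain ⟨W', R', hW', hWR', hR', hWT'⟩ := Matrix.exists_isometry_upperTriangular hL'
  refine ⟨W, W', hW, hW', ?_, ?_, ?_, ?_⟩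
  · intro j i hji
    rw [hWR, Matrix.mul_apply]
    refine Finset.sum_eq_zero fun l _ => ?_
    by_cases hl : i < l
    · rw [hR l i hl, mul_zero]
    · have : β⁻¹ j (e l) = 0 := by
        by_contra h
        exact absurd ((hβi j (e l) h).trans (he (not_lt.1 hl))) (not_le.2 hji)
      rw [Matrix.submatrix_apply, id, this, zero_mul]
  · intro j i hji
    rw [hWR', Matrix.mul_apply]
    refine Finset.sum_eq_zero fun l _ => ?_
    by_cases hl : i < l
    · rw [hR' l i hl, mul_zero]
    · have : β' j (e' l) = 0 := by
        by_contra h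
        exact absurd ((he' (not_lt.1 hl)).trans (hβ' j (e' l) h).2) (not_le.2 hji)
      rw [Matrix.submatrix_apply, id, this, zero_mul]
  · have := Matrix.blockSupported_isometry_mul_conjTranspose (c := c) (e := e')
      (fun j i h => (hβ' j (e' i) h).1) hWR' hWT'
    intro i j hij
    by_contra h
    exact hij (this i j h)
  · have hkT : β' * χ * β * β⁻¹.submatrix id e = β'.submatrix id e' * χ.submatrix e' e := by
      have h₁ : β' * χ * β * β⁻¹.submatrix id e = (β' * χ).submatrix id e := by
        have : β' * χ * β * β⁻¹.submatrix id e = (β' * χ * β * β⁻¹).submatrix id e := by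
          rw [Matrix.submatrix_mul _ _ id id e Function.bijective_id, Matrix.submatrix_id_id]
        rw [this, Matrix.mul_assoc (β' * χ), Matrix.mul_nonsing_inv _ hdβ, Matrix.mul_one]
      rw [h₁]
      ext j i
      rw [Matrix.submatrix_apply, Matrix.mul_apply, Matrix.mul_apply]
      refine (Fintype.sum_of_injective e' hinj' _ _ (fun x hx => ?_) (fun x => rfl)).symm
      rw [hχ x i hx, mul_zero]
    rw [Matrix.mul_assoc (W' * W'ᴴ), hWR, ← Matrix.mul_assoc (β' * χ * β), hkT,
      ← Matrix.mul_assoc (W' * W'ᴴ), ← Matrix.mul_assoc (W' * W'ᴴ), hWT']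

omit [Fintype ι] [DecidableEq ι] in
theorem exists_injective_monotone_comp (S : Finset ι) (f : ι → ℝ) :
    ∃ e : Fin S.card → ι, Function.Injective e ∧ Set.range e = S ∧ Monotone (f ∘ e) := by
  let e₀ : Fin S.card → ι := fun i => (S.equivFin.symm i : ι)
  refine ⟨e₀ ∘ Tuple.sort (f ∘ e₀), ?_, ?_, Tuple.monotone_sort (f ∘ e₀)⟩
  · exact (Subtype.val_injective.comp S.equivFin.symm.injective).comp (Equiv.injective _)
  · rw [(Equiv.surjective _).range_comp]
    ext x
    constructor
    · rintro ⟨i, rfl⟩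
      exact (S.equivFin.symm i).2
    · intro hx
      exact ⟨S.equivFin ⟨x, hx⟩, by simp [e₀]⟩

/-- A Schubert-type inequality between the diagonal blocks and the spectrum of a Hermitian
matrix, valid under a transversality hypothesis at `u`. -/
theorem Matrix.sum_le_sum_of_transversal (c : ι → κ) (a d m : ι → ℝ) {u k : Matrix ι ι ℂ}
    (hu : u.BlockSupported d) (hk : k ∈ Matrix.unitaryGroup ι ℂ)
    (hka : Matrix.blockPart c (k * diagonal (fun i => (m i : ℂ)) * kᴴ) =
      diagonal fun i => (a i : ℂ))
    (hsurj : ∀ ξ : Matrix ι ι ℂ, (∀ j i, ¬ (0 < d i ∧ d j ≤ 0) → ξ j i = 0) →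
      (∀ j i, c j = c i ∧ a i ≤ a j → (ξ * uᴴ) j i = 0) →
      (∀ j i, m j ≤ m i → (uᴴ * ξ) j i = 0) → ξ = 0) :
    ∑ i with 0 < d i, a i ≤ ∑ i with 0 < d i, m i := by
  set S : Finset ι := Finset.univ.filter fun i => 0 < d i with hS
  obtain ⟨e, hinj, hrange, he⟩ := exists_injective_monotone_comp S m
  obtain ⟨e', hinj', hrange', he'⟩ := exists_injective_monotone_comp S fun i => -a i
  have he'a : Antitone (a ∘ e') := fun x y hxy => neg_le_neg_iff.1 (he' hxy)
  have hsum : ∀ (f : ι → ℝ) (e : Fin S.card → ι), Function.Injective e → Set.range e = S →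
      ∑ i ∈ S, f i = ∑ i, f (e i) := by
    intro f e hinj hrange
    have : S = Finset.univ.image e := by
      ext x
      rw [← Finset.mem_coe, ← hrange]
      simp
    rw [show ∑ i ∈ S, f i = ∑ i ∈ Finset.univ.image e, f i from
      Finset.sum_congr this fun _ _ => rfl, Finset.sum_image fun x _ y _ h => hinj h]
  rw [hsum a e' hinj' hrange', hsum m e hinj hrange]
  have hmemS : ∀ (e : Fin S.card → ι), Set.range e = S → ∀ x, x ∈ Set.range e ↔ 0 < d x := by
    intro e h x
    rw [h, Finset.mem_coe, hS, Finset.mem_filter]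
    simp
  have hdense := Matrix.dense_mask_mul (fun j i => c j = c i ∧ a i ≤ a j)
    (fun j i => ¬ (0 < d i ∧ d j ≤ 0)) (fun j i => m j ≤ m i) u
    (fun i j hij => by
      rw [not_not] at hij
      by_contra h
      exact absurd (hu i j h ▸ hij.2) (not_le.2 hij.1))
    (fun i => ⟨rfl, le_rfl⟩) (fun i => le_rfl) hsurj
  have hkk : kᴴ * k = 1 := Matrix.mem_unitaryGroup_iff'.1 hk
  have hkdet : k.det ≠ 0 := by
    intro h
    have := congrArg Matrix.det hkk
    rw [Matrix.det_mul, h, mul_zero, Matrix.det_one] at this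
    exact zero_ne_one this
  refine Matrix.sum_le_sum_of_mem_schubertIncidence hkk ?_ hka
  have hU : IsOpen {x : Matrix ι ι ℂ | x.det ≠ 0} :=
    isOpen_ne_fun (continuous_id.matrix_det) continuous_const
  have hcl := hdense.open_subset_closure_inter hU hkdet
  refine closure_minimal ?_ (Matrix.isClosed_schubertIncidence c a m e e') hcl
  rintro _ ⟨hx, ⟨X, rfl⟩⟩
  have hmask : ∀ (P : ι → ι → Prop) (X : Matrix ι ι ℂ) j i, maskEntries P X j i ≠ 0 → P j i := by
    intro P X j i h
    by_contra hP
    exact h (if_neg hP)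
  refine Matrix.mul_mem_schubertIncidence he he'a hinj hinj' (fun j i h => hmask _ _ j i h)
    ?_ (fun j i h => hmask _ _ j i h) hx
  intro j i hj
  by_contra h
  rw [hmemS e' hrange'] at hj
  exact hmask _ _ j (e i) h ⟨(hmemS e hrange _).1 ⟨i, rfl⟩, not_lt.1 hj⟩

end Schubert

section Transversality

variable {ι κ : Type*} [Fintype ι] [DecidableEq ι]

omit [DecidableEq ι] in
theorem Matrix.exists_ne_zero_of_mul_mul_ne_zero {X Y Z : Matrix ι ι ℂ} {j i : ι}
    (h : (X * Y * Z) j i ≠ 0) : ∃ k l, X j k ≠ 0 ∧ Y k l ≠ 0 ∧ Z l i ≠ 0 := by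
  rw [Matrix.mul_apply] at h
  obtain ⟨l, -, hl⟩ := Finset.exists_ne_zero_of_sum_ne_zero h
  have h' := left_ne_zero_of_mul hl
  rw [Matrix.mul_apply] at h'
  obtain ⟨k, -, hk⟩ := Finset.exists_ne_zero_of_sum_ne_zero h'
  exact ⟨k, l, left_ne_zero_of_mul hk, right_ne_zero_of_mul hk, right_ne_zero_of_mul hl⟩

/-- The directions `η` which decrease `d`, decrease `a` inside the blocks of `c`, and increase `m`
in the basis given by the columns of `u`. -/
structure Matrix.IsNormalDirection (c : ι → κ) (a d m : ι → ℝ) (u η : Matrix ι ι ℂ) : Prop where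
  lt_d : ∀ j i, η j i ≠ 0 → d j < d i
  lt_a : ∀ j i, c j = c i → η j i ≠ 0 → a j < a i
  lt_m : ∀ j i, (uᴴ * η * u) j i ≠ 0 → m i < m j

namespace Matrix.IsNormalDirection

variable {c : ι → κ} {a d m : ι → ℝ} {u J η η' : Matrix ι ι ℂ}

omit [DecidableEq ι] in
theorem add (h : IsNormalDirection c a d m u η) (h' : IsNormalDirection c a d m u η') :
    IsNormalDirection c a d m u (η + η') := by
  have key : ∀ (X Y : Matrix ι ι ℂ) j i, (X + Y) j i ≠ 0 → X j i ≠ 0 ∨ Y j i ≠ 0 := by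
    intro X Y j i hXY
    by_contra! hc
    rw [Matrix.add_apply, hc.1, hc.2, add_zero] at hXY
    exact hXY rfl
  refine ⟨fun j i hji => ?_, fun j i hc hji => ?_, fun j i hji => ?_⟩
  · exact (key _ _ j i hji).elim (h.lt_d j i) (h'.lt_d j i)
  · exact (key _ _ j i hji).elim (h.lt_a j i hc) (h'.lt_a j i hc)
  · rw [Matrix.mul_add, Matrix.add_mul] at hji
    exact (key _ _ j i hji).elim (h.lt_m j i) (h'.lt_m j i)

omit [DecidableEq ι] in
theorem smul (h : IsNormalDirection c a d m u η) (z : ℂ) :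
    IsNormalDirection c a d m u (z • η) := by
  refine ⟨fun j i hji => ?_, fun j i hc hji => ?_, fun j i hji => ?_⟩
  · exact h.lt_d j i (right_ne_zero_of_mul hji)
  · exact h.lt_a j i hc (right_ne_zero_of_mul hji)
  · rw [Matrix.mul_smul, Matrix.smul_mul] at hji
    exact h.lt_m j i (right_ne_zero_of_mul hji)

theorem involution (h : IsNormalDirection c a d m u η) (hu : u * uᴴ = 1)
    (hJc : J.BlockSupported c)
    (hJd : ∀ i j, J i j ≠ 0 → d i = -d j) (hJa : ∀ i j, J i j ≠ 0 → a i = -a j)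
    (hJm : ∀ i j, (uᴴ * J * u) i j ≠ 0 → m i = -m j) :
    IsNormalDirection c a d m u (J * ηᴴ * J) := by
  have hstar : ∀ (X : Matrix ι ι ℂ) k l, Xᴴ k l ≠ 0 → X l k ≠ 0 := by
    intro X k l hX h0
    exact hX (by rw [Matrix.conjTranspose_apply, h0, star_zero])
  refine ⟨fun j i hji => ?_, fun j i hc hji => ?_, fun j i hji => ?_⟩
  · obtain ⟨k, l, h₁, h₂, h₃⟩ := exists_ne_zero_of_mul_mul_ne_zero hji
    have := h.lt_d l k (hstar _ _ _ h₂)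
    linarith [hJd _ _ h₁, hJd _ _ h₃]
  · obtain ⟨k, l, h₁, h₂, h₃⟩ := exists_ne_zero_of_mul_mul_ne_zero hji
    have := h.lt_a l k (by rw [hJc _ _ h₃, ← hJc _ _ h₁, hc]) (hstar _ _ _ h₂)
    linarith [hJa _ _ h₁, hJa _ _ h₃]
  · have heq : uᴴ * (J * ηᴴ * J) * u = (uᴴ * J * u) * (uᴴ * η * u)ᴴ * (uᴴ * J * u) := by
      calc uᴴ * (J * ηᴴ * J) * u = uᴴ * J * (u * uᴴ) * ηᴴ * (u * uᴴ) * J * u := by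
            rw [hu, Matrix.mul_one, Matrix.mul_one]; simp only [Matrix.mul_assoc]
        _ = _ := by
            rw [Matrix.conjTranspose_mul, Matrix.conjTranspose_mul,
              Matrix.conjTranspose_conjTranspose]
            simp only [Matrix.mul_assoc]
    rw [heq] at hji
    obtain ⟨k, l, h₁, h₂, h₃⟩ := exists_ne_zero_of_mul_mul_ne_zero hji
    have := h.lt_m l k (hstar _ _ _ h₂)
    linarith [hJm _ _ h₁, hJm _ _ h₃]

end Matrix.IsNormalDirection

variable {c : ι → κ} {a d m : ι → ℝ} {u J η : Matrix ι ι ℂ}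

/-- The second-order optimality condition rules out odd normal directions. -/
theorem Matrix.IsNormalDirection.eq_zero_of_odd (hu : u * uᴴ = 1) (hud : u.BlockSupported d)
    (hJ : J * J = 1) (hJs : Jᴴ = J) (hJc : J.BlockSupported c)
    (hJd : J * diagonal (fun i => (d i : ℂ)) = -(diagonal (fun i => (d i : ℂ)) * J))
    (hJa : J * diagonal (fun i => (a i : ℂ)) = -(diagonal (fun i => (a i : ℂ)) * J))
    (hJm : J * (u * diagonal (fun i => (m i : ℂ)) * uᴴ) =
      -(u * diagonal (fun i => (m i : ℂ)) * uᴴ * J))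
    (hvar : ∀ {K H : Matrix ι ι ℂ}, Kᴴ = -K → Hᴴ = -H → J * K = K * J → J * H = H * J →
      H.BlockSupported c → ∀ {M A D : Matrix ι ι ℂ},
      M = u * diagonal (fun i => (m i : ℂ)) * uᴴ → A = diagonal (fun i => (a i : ℂ)) →
      D = diagonal (fun i => (d i : ℂ)) →
      H * A - A * H = blockPart c (K * M - M * K) →
      0 ≤ (D * ((H * (H * A - A * H) - (H * A - A * H) * H) -
        blockPart c (K * (K * M - M * K) - (K * M - M * K) * K))).trace.re)
    (h : IsNormalDirection c a d m u η) (hη : J * η = -(ηᴴ * J)) : η = 0 := by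
  have hu' : uᴴ * u = 1 := mul_eq_one_comm.1 hu
  have hηJ : η * J = -(J * ηᴴ) := by
    calc η * J = J * (J * η) * J := by rw [← Matrix.mul_assoc J J, hJ, Matrix.one_mul]
      _ = -(J * ηᴴ * (J * J)) := by
        rw [hη, Matrix.mul_neg, Matrix.neg_mul]; simp only [Matrix.mul_assoc]
      _ = _ := by rw [hJ, Matrix.mul_one]
  set θ : Matrix ι ι ℂ := η + ηᴴ with hθdef
  have hθs : θᴴ = θ := by
    rw [hθdef, Matrix.conjTranspose_add, Matrix.conjTranspose_conjTranspose, add_comm]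
  have hθJ : J * θ = -(θ * J) := by
    rw [hθdef, Matrix.mul_add, Matrix.add_mul, hη, hηJ]
    abel
  have hud' : uᴴ * diagonal (fun i => (d i : ℂ)) = diagonal (fun i => (d i : ℂ)) * uᴴ :=
    blockSupported_ofReal_iff.1 hud.conjTranspose
  have hud₀ : u * diagonal (fun i => (d i : ℂ)) = diagonal (fun i => (d i : ℂ)) * u :=
    blockSupported_ofReal_iff.1 hud
  have hcancel : ∀ X Y : Matrix ι ι ℂ, (uᴴ * X * u) * (uᴴ * Y * u) = uᴴ * (X * Y) * u := by
    intro X Y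
    calc (uᴴ * X * u) * (uᴴ * Y * u) = uᴴ * X * (u * uᴴ) * Y * u := by
          simp only [Matrix.mul_assoc]
      _ = _ := by rw [hu, Matrix.mul_one]; simp only [Matrix.mul_assoc]
  have hdconj : uᴴ * diagonal (fun i => (d i : ℂ)) * u = diagonal (fun i => (d i : ℂ)) := by
    rw [hud', Matrix.mul_assoc, hu', Matrix.mul_one]
  have hmconj : uᴴ * (u * diagonal (fun i => (m i : ℂ)) * uᴴ) * u =
      diagonal (fun i => (m i : ℂ)) := by
    calc _ = (uᴴ * u) * diagonal (fun i => (m i : ℂ)) * (uᴴ * u) := by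
          simp only [Matrix.mul_assoc]
      _ = _ := by rw [hu', Matrix.mul_one, Matrix.one_mul]
  set θ' : Matrix ι ι ℂ := uᴴ * θ * u with hθ'def
  have hθ'or : ∀ j i, θ' j i ≠ 0 → (d j < d i ∧ m i < m j) ∨ (d i < d j ∧ m j < m i) := by
    have key : ∀ j i, (uᴴ * η * u) j i ≠ 0 → d j < d i ∧ m i < m j := by
      intro j i hji
      refine ⟨?_, h.lt_m j i hji⟩
      obtain ⟨k, l, h₁, h₂, h₃⟩ := exists_ne_zero_of_mul_mul_ne_zero hji
      rw [hud.conjTranspose _ _ h₁, ← hud _ _ h₃]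
      exact h.lt_d k l h₂
    intro j i hji
    have heq : θ' = uᴴ * η * u + (uᴴ * η * u)ᴴ := by
      rw [hθ'def, hθdef, Matrix.mul_add, Matrix.add_mul, Matrix.conjTranspose_mul,
        Matrix.conjTranspose_mul, Matrix.conjTranspose_conjTranspose, Matrix.mul_assoc _ ηᴴ]
    by_cases h0 : (uᴴ * η * u) j i = 0
    · right
      refine key i j fun h1 => hji ?_
      rw [heq, Matrix.add_apply, h0, Matrix.conjTranspose_apply, h1, star_zero, add_zero]
    · exact Or.inl (key j i h0)
  have hθ's : θ'ᴴ = θ' := by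
    rw [hθ'def, Matrix.conjTranspose_mul, Matrix.conjTranspose_mul,
      Matrix.conjTranspose_conjTranspose, hθs, Matrix.mul_assoc]
  obtain ⟨K', hK's, hK'J, hK'm, -, hK'tr⟩ := Matrix.exists_even_commutator_eq (κ := κ)
    (J := uᴴ * J * u) (θ := θ') (m := m) (d := d)
    (by rw [hcancel, hJ, Matrix.mul_one, hu'])
    (by rw [Matrix.conjTranspose_mul, Matrix.conjTranspose_mul,
      Matrix.conjTranspose_conjTranspose, hJs, Matrix.mul_assoc])
    (by
      rw [← hmconj, hcancel, hcancel, hJm, Matrix.mul_neg, Matrix.neg_mul])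
    (by
      conv_lhs => rw [← hdconj]
      conv_rhs => rw [← hdconj]
      rw [hcancel, hcancel, hJd, Matrix.mul_neg, Matrix.neg_mul])
    (by rw [hθ'def, hcancel, hcancel, hθJ, Matrix.mul_neg, Matrix.neg_mul])
    hθ's
    (fun j i hji => (hθ'or j i hji).elim (fun h => h.2.ne) (fun h => h.2.ne'))
  set θc : Matrix ι ι ℂ := blockPart c θ with hθc
  have hθcor : ∀ j i, θc j i ≠ 0 → (d j < d i ∧ a j < a i) ∨ (d i < d j ∧ a i < a j) := by
    intro j i hji
    have hc : c j = c i := blockPart_supported c θ j i hji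
    rw [hθc, blockPart_apply_of_eq _ hc] at hji
    by_cases h0 : η j i = 0
    · right
      have : η i j ≠ 0 := fun h1 => hji (by
        rw [hθdef, Matrix.add_apply, h0, Matrix.conjTranspose_apply, h1, star_zero, add_zero])
      exact ⟨h.lt_d i j this, h.lt_a i j hc.symm this⟩
    · exact Or.inl ⟨h.lt_d j i h0, h.lt_a j i hc h0⟩
  obtain ⟨H, hHs, hHJ, hHa, hHc, hHtr⟩ := Matrix.exists_even_commutator_eq (κ := κ)
    (J := J) (θ := θc) (m := a) (d := d) hJ hJs hJa hJd
    (by rw [hθc, ← blockPart_mul_left hJc, hθJ, blockPart_neg, blockPart_mul_right hJc])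
    (by rw [hθc, ← blockPart_conjTranspose, hθs])
    (fun j i hji => (hθcor j i hji).elim (fun h => h.2.ne') (fun h => h.2.ne))
  have hcancel' : ∀ X Y : Matrix ι ι ℂ, (u * X * uᴴ) * (u * Y * uᴴ) = u * (X * Y) * uᴴ := by
    intro X Y
    calc (u * X * uᴴ) * (u * Y * uᴴ) = u * X * (uᴴ * u) * Y * uᴴ := by
          simp only [Matrix.mul_assoc]
      _ = _ := by rw [hu', Matrix.mul_one]; simp only [Matrix.mul_assoc]
  have hback : ∀ X : Matrix ι ι ℂ, u * (uᴴ * X * u) * uᴴ = X := by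
    intro X
    calc _ = (u * uᴴ) * X * (u * uᴴ) := by simp only [Matrix.mul_assoc]
      _ = _ := by rw [hu, Matrix.mul_one, Matrix.one_mul]
  have hθθ' : θ = u * θ' * uᴴ := (hback θ).symm
  set K : Matrix ι ι ℂ := u * K' * uᴴ with hK
  have hKM : K * (u * diagonal (fun i => (m i : ℂ)) * uᴴ) -
      (u * diagonal (fun i => (m i : ℂ)) * uᴴ) * K = θ := by
    rw [hK, hcancel', hcancel', ← Matrix.sub_mul, ← Matrix.mul_sub, hK'm, ← hθθ']
  have hpos := hvar (K := K) (H := H)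
    (by rw [hK, Matrix.conjTranspose_mul, Matrix.conjTranspose_mul,
      Matrix.conjTranspose_conjTranspose, hK's, Matrix.neg_mul, Matrix.mul_neg, Matrix.mul_assoc])
    hHs
    (by
      rw [← hback J, hK, hcancel', hcancel', hK'J])
    hHJ (hHc c hJc (blockPart_supported c θ)) rfl rfl rfl
    (by rw [hHa, hKM])
  rw [hHa, hKM, Matrix.mul_sub, Matrix.trace_sub, Complex.sub_re, hHtr,
    trace_mul_blockPart (BlockSupported.diagonal _)] at hpos
  have hKtr : (diagonal (fun i => (d i : ℂ)) * (K * θ - θ * K)).trace =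
      (diagonal (fun i => (d i : ℂ)) * (K' * θ' - θ' * K')).trace := by
    have h1 : K * θ - θ * K = u * (K' * θ' - θ' * K') * uᴴ := by
      rw [hθθ', hK, hcancel', hcancel', ← Matrix.sub_mul, ← Matrix.mul_sub]
    rw [h1, ← Matrix.mul_assoc, ← Matrix.mul_assoc, ← hud₀, Matrix.trace_mul_comm,
      ← Matrix.mul_assoc, ← Matrix.mul_assoc, hu', Matrix.one_mul]
  rw [hKtr, hK'tr, Complex.ofReal_re, Complex.ofReal_re] at hpos
  have hle : ∑ j, ∑ i, (d j - d i) / (a i - a j) * Complex.normSq (θc j i) ≤ 0 := by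
    refine Finset.sum_nonpos fun j _ => Finset.sum_nonpos fun i _ => ?_
    by_cases h0 : θc j i = 0
    · rw [h0, map_zero, mul_zero]
    · refine mul_nonpos_of_nonpos_of_nonneg ?_ (Complex.normSq_nonneg _)
      rcases hθcor j i h0 with ⟨h1, h2⟩ | ⟨h1, h2⟩
      · exact div_nonpos_of_nonpos_of_nonneg (by linarith) (by linarith)
      · exact div_nonpos_of_nonneg_of_nonpos (by linarith) (by linarith)
  have hterm : ∀ j i, 0 ≤ (d j - d i) / (m i - m j) * Complex.normSq (θ' j i) := by
    intro j i
    by_cases h0 : θ' j i = 0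
    · rw [h0, map_zero, mul_zero]
    · refine mul_nonneg ?_ (Complex.normSq_nonneg _)
      rcases hθ'or j i h0 with ⟨h1, h2⟩ | ⟨h1, h2⟩
      · exact div_nonneg_of_nonpos (by linarith) (by linarith)
      · exact div_nonneg (by linarith) (by linarith)
  have hzero : ∑ j, ∑ i, (d j - d i) / (m i - m j) * Complex.normSq (θ' j i) = 0 :=
    le_antisymm (by linarith)
      (Finset.sum_nonneg fun j _ => Finset.sum_nonneg fun i _ => hterm j i)
  have hθ'0 : θ' = 0 := by
    ext j i
    by_contra h0
    rw [Matrix.zero_apply] at h0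
    rw [Finset.sum_eq_zero_iff_of_nonneg
      fun j _ => Finset.sum_nonneg fun i _ => hterm j i] at hzero
    have := (Finset.sum_eq_zero_iff_of_nonneg fun i _ => hterm j i).1
      (hzero j (Finset.mem_univ j)) i (Finset.mem_univ i)
    rcases mul_eq_zero.1 this with h1 | h1
    · rcases div_eq_zero_iff.1 h1 with h2 | h2 <;>
      rcases hθ'or j i h0 with ⟨h3, h4⟩ | ⟨h3, h4⟩ <;> linarith
    · exact h0 (Complex.normSq_eq_zero.1 h1)
  have hθ0 : θ = 0 := by rw [hθθ', hθ'0, Matrix.mul_zero, Matrix.zero_mul]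
  ext j i
  by_contra h0
  rw [Matrix.zero_apply] at h0
  have h1 := congrFun (congrFun hθ0 j) i
  have h2 : η i j = 0 := by
    by_contra h2
    exact absurd (h.lt_d i j h2) (not_lt.2 (h.lt_d j i h0).le)
  rw [hθdef, Matrix.add_apply, Matrix.conjTranspose_apply, h2, star_zero, add_zero,
    Matrix.zero_apply] at h1
  exact h0 h1

/-- The second-order optimality condition rules out all normal directions. -/
theorem Matrix.IsNormalDirection.eq_zero (hu : u * uᴴ = 1) (hud : u.BlockSupported d)
    (hJ : J * J = 1) (hJs : Jᴴ = J) (hJc : J.BlockSupported c)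
    (hJd : J * diagonal (fun i => (d i : ℂ)) = -(diagonal (fun i => (d i : ℂ)) * J))
    (hJa : J * diagonal (fun i => (a i : ℂ)) = -(diagonal (fun i => (a i : ℂ)) * J))
    (hJm : J * (u * diagonal (fun i => (m i : ℂ)) * uᴴ) =
      -(u * diagonal (fun i => (m i : ℂ)) * uᴴ * J))
    (hvar : ∀ {K H : Matrix ι ι ℂ}, Kᴴ = -K → Hᴴ = -H → J * K = K * J → J * H = H * J →
      H.BlockSupported c → ∀ {M A D : Matrix ι ι ℂ},
      M = u * diagonal (fun i => (m i : ℂ)) * uᴴ → A = diagonal (fun i => (a i : ℂ)) →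
      D = diagonal (fun i => (d i : ℂ)) →
      H * A - A * H = blockPart c (K * M - M * K) →
      0 ≤ (D * ((H * (H * A - A * H) - (H * A - A * H) * H) -
        blockPart c (K * (K * M - M * K) - (K * M - M * K) * K))).trace.re)
    (h : IsNormalDirection c a d m u η) : η = 0 := by
  have hu' : uᴴ * u = 1 := mul_eq_one_comm.1 hu
  have hJmul : ∀ X : Matrix ι ι ℂ, J * (J * X) = X := fun X => by
    rw [← Matrix.mul_assoc, hJ, Matrix.one_mul]
  have hJ'm : ∀ i j, (uᴴ * J * u) i j ≠ 0 → m i = -m j := fun i j hij =>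
    eq_neg_of_anticommute_diagonal (by
      have h1 := congrArg (fun X => uᴴ * X * u) hJm
      simp only [Matrix.mul_neg, Matrix.neg_mul] at h1
      calc uᴴ * J * u * diagonal (fun i => (m i : ℂ))
          = uᴴ * (J * (u * diagonal (fun i => (m i : ℂ)) * uᴴ)) * u := by
            simp only [Matrix.mul_assoc, hu', Matrix.mul_one]
        _ = _ := by
            rw [h1]
            simp only [← Matrix.mul_assoc, hu', Matrix.one_mul]) hij
  have main : ∀ ζ, IsNormalDirection c a d m u ζ → ζ = J * ζᴴ * J := by
    have step : ∀ ζ, IsNormalDirection c a d m u ζ → ζ + (-1 : ℂ) • (J * ζᴴ * J) = 0 := by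
      intro ζ hζ
      refine Matrix.IsNormalDirection.eq_zero_of_odd hu hud hJ hJs hJc hJd hJa hJm hvar
        (hζ.add ((hζ.involution hu hJc (fun i j => eq_neg_of_anticommute_diagonal hJd)
          (fun i j => eq_neg_of_anticommute_diagonal hJa) hJ'm).smul (-1))) ?_
      rw [neg_one_smul, Matrix.conjTranspose_add, Matrix.conjTranspose_neg,
        Matrix.conjTranspose_mul, Matrix.conjTranspose_mul, Matrix.conjTranspose_conjTranspose,
        hJs, Matrix.mul_add, Matrix.add_mul, Matrix.mul_neg, Matrix.neg_mul,
        Matrix.mul_assoc J ζᴴ, hJmul, Matrix.mul_assoc J (ζ * J), Matrix.mul_assoc ζ J, hJ,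
        Matrix.mul_one]
      abel
    intro ζ hζ
    have := step ζ hζ
    rwa [neg_one_smul, ← sub_eq_add_neg, sub_eq_zero] at this
  have h1 := main η h
  have h2 := main _ (h.smul Complex.I)
  rw [Matrix.conjTranspose_smul, Matrix.mul_smul, Matrix.smul_mul, ← h1, ← sub_eq_zero, ← sub_smul]
    at h2
  refine (smul_eq_zero.1 h2).resolve_left ?_
  simp [Complex.ext_iff]

end Transversality

section OddConjugation

variable {ι κ : Type*} [Fintype ι] [DecidableEq ι] {c : ι → κ}

theorem Matrix.defect_eq_zero_of_diagonal {a d m : ι → ℝ} {u J k : Matrix ι ι ℂ}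
    (hu : u * uᴴ = 1) (hud : u.BlockSupported d)
    (hJ : J * J = 1) (hJs : Jᴴ = J) (hJc : J.BlockSupported c)
    (hJd : J * diagonal (fun i => (d i : ℂ)) = -(diagonal (fun i => (d i : ℂ)) * J))
    (hJa : J * diagonal (fun i => (a i : ℂ)) = -(diagonal (fun i => (a i : ℂ)) * J))
    (hJm : J * (u * diagonal (fun i => (m i : ℂ)) * uᴴ) =
      -(u * diagonal (fun i => (m i : ℂ)) * uᴴ * J))
    (hvar : ∀ {K H : Matrix ι ι ℂ}, Kᴴ = -K → Hᴴ = -H → J * K = K * J → J * H = H * J →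
      H.BlockSupported c → ∀ {M A D : Matrix ι ι ℂ},
      M = u * diagonal (fun i => (m i : ℂ)) * uᴴ → A = diagonal (fun i => (a i : ℂ)) →
      D = diagonal (fun i => (d i : ℂ)) →
      H * A - A * H = blockPart c (K * M - M * K) →
      0 ≤ (D * ((H * (H * A - A * H) - (H * A - A * H) * H) -
        blockPart c (K * (K * M - M * K) - (K * M - M * K) * K))).trace.re)
    (hD : diagonal (fun i => (d i : ℂ)) = diagonal (fun i => (a i : ℂ)) -
      blockPart c (u * diagonal (fun i => (m i : ℂ)) * uᴴ))
    (hk : k ∈ Matrix.unitaryGroup ι ℂ)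
    (hka : blockPart c (k * diagonal (fun i => (m i : ℂ)) * kᴴ) =
      diagonal fun i => (a i : ℂ)) (i : ι) : d i = 0 := by
  have hu' : uᴴ * u = 1 := mul_eq_one_comm.1 hu
  have hsum := Matrix.sum_le_sum_of_transversal c a d m hud hk hka (by
    intro ξ h₁ h₂ h₃
    have hη : ξ * uᴴ = 0 := by
      refine Matrix.IsNormalDirection.eq_zero hu hud hJ hJs hJc hJd hJa hJm hvar ⟨?_, ?_, ?_⟩
      · intro j i hji
        rw [Matrix.mul_apply] at hji
        obtain ⟨l, -, hl⟩ := Finset.exists_ne_zero_of_sum_ne_zero hji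
        rw [← hud.conjTranspose _ _ (right_ne_zero_of_mul hl)]
        by_contra hlt
        refine left_ne_zero_of_mul hl (h₁ j l fun h => hlt ?_)
        exact h.2.trans_lt h.1
      · intro j i hc hji
        by_contra hlt
        exact hji (h₂ j i ⟨hc, not_lt.1 hlt⟩)
      · intro j i hji
        rw [Matrix.mul_assoc, Matrix.mul_assoc, hu', Matrix.mul_one] at hji
        by_contra hlt
        exact hji (h₃ j i (not_lt.1 hlt))
    calc ξ = ξ * uᴴ * u := by rw [Matrix.mul_assoc, hu', Matrix.mul_one]
      _ = 0 := by rw [hη, Matrix.zero_mul])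
  have hdiag : ∀ i, d i = a i - ((u * diagonal (fun i => (m i : ℂ)) * uᴴ) i i).re := by
    intro i
    have h := congrArg Complex.re (congrFun (congrFun hD i) i)
    rwa [Matrix.sub_apply, Matrix.diagonal_apply_eq, Matrix.diagonal_apply_eq,
      blockPart_apply_of_eq _ rfl, Complex.sub_re, Complex.ofReal_re, Complex.ofReal_re] at h
  have htr : ∑ i with 0 < d i, ((u * diagonal (fun i => (m i : ℂ)) * uᴴ) i i).re =
      ∑ i with 0 < d i, m i := by
    let P : Matrix ι ι ℂ := diagonal fun i => if 0 < d i then 1 else 0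
    have hPu : P * u = u * P := by
      ext j i
      rw [Matrix.diagonal_mul, Matrix.mul_diagonal]
      by_cases h0 : u j i = 0
      · rw [h0, mul_zero, zero_mul]
      · rw [hud j i h0, mul_comm]
    have h1 : (P * (u * diagonal (fun i => (m i : ℂ)) * uᴴ)).trace =
        (P * diagonal (fun i => (m i : ℂ))).trace := by
      calc _ = (u * (P * diagonal (fun i => (m i : ℂ)) * uᴴ)).trace := by
            rw [← Matrix.mul_assoc, ← Matrix.mul_assoc, hPu]; simp only [Matrix.mul_assoc]
        _ = _ := by rw [Matrix.trace_mul_comm, Matrix.mul_assoc, hu', Matrix.mul_one]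
    have h2 : ∀ X : Matrix ι ι ℂ, (P * X).trace.re = ∑ i with 0 < d i, (X i i).re := by
      intro X
      rw [Matrix.trace, Complex.re_sum, Finset.sum_filter]
      refine Finset.sum_congr rfl fun i _ => ?_
      rw [Matrix.diag_apply, Matrix.diagonal_mul]
      split_ifs <;> simp
    have h3 := congrArg Complex.re h1
    rw [h2, h2] at h3
    rw [h3]
    refine Finset.sum_congr rfl fun i _ => ?_
    rw [Matrix.diagonal_apply_eq, Complex.ofReal_re]
  have hle : ∀ i, d i ≤ 0 := by
    by_contra! h
    obtain ⟨i, hi⟩ := h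
    have hpos : 0 < ∑ i with 0 < d i, d i :=
      Finset.sum_pos (fun i hi => (Finset.mem_filter.1 hi).2)
        ⟨i, Finset.mem_filter.2 ⟨Finset.mem_univ i, hi⟩⟩
    rw [Finset.sum_congr rfl fun i _ => hdiag i, Finset.sum_sub_distrib, htr] at hpos
    linarith
  have htrd : ∑ i, d i = 0 := by
    have h1 : (diagonal (fun i => (d i : ℂ))).trace = -(diagonal (fun i => (d i : ℂ))).trace := by
      calc (diagonal (fun i => (d i : ℂ))).trace
          = (J * (J * diagonal (fun i => (d i : ℂ)))).trace := by
            rw [← Matrix.mul_assoc, hJ, Matrix.one_mul]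
        _ = _ := by
            rw [Matrix.trace_mul_comm, hJd, Matrix.neg_mul, Matrix.mul_assoc, hJ, Matrix.mul_one,
              Matrix.trace_neg]
    rw [Matrix.trace_diagonal, ← Complex.ofReal_sum, ← Complex.ofReal_neg,
      Complex.ofReal_inj] at h1
    linarith
  exact (Finset.sum_eq_zero_iff_of_nonpos fun i _ => hle i).1 htrd i (Finset.mem_univ i)

omit [Fintype ι] [DecidableEq ι] in
theorem Matrix.continuous_blockPart (c : ι → κ) :
    Continuous (blockPart c : Matrix ι ι ℂ → Matrix ι ι ℂ) := by
  refine continuous_matrix fun i j => ?_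
  by_cases h : c i = c j
  · simp only [blockPart_apply_of_eq _ h]
    exact continuous_id.matrix_elem i j
  · simp only [blockPart_apply_of_ne _ h]
    exact continuous_const

theorem Matrix.exists_even_unitary_min (c : ι → κ) (J A M : Matrix ι ι ℂ) :
    ∃ k₀ ∈ Matrix.unitaryGroup ι ℂ, J * k₀ = k₀ * J ∧
      ∀ k ∈ Matrix.unitaryGroup ι ℂ, J * k = k * J →
        ((A - blockPart c (k₀ * M * k₀ᴴ)) * (A - blockPart c (k₀ * M * k₀ᴴ))).trace.re ≤
        ((A - blockPart c (k * M * kᴴ)) * (A - blockPart c (k * M * kᴴ))).trace.re := by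
  have hcpt : IsCompact ({k : Matrix ι ι ℂ | kᴴ * k = 1} ∩ {k | J * k = k * J}) :=
    Matrix.isCompact_isometries.inter_right
      (isClosed_eq (continuous_const.matrix_mul continuous_id)
        (continuous_id.matrix_mul continuous_const))
  have hcont : Continuous fun k : Matrix ι ι ℂ => A - blockPart c (k * M * kᴴ) :=
    continuous_const.sub ((Matrix.continuous_blockPart c).comp
      ((continuous_id.matrix_mul continuous_const).matrix_mul continuous_id.matrix_conjTranspose))
  obtain ⟨k₀, ⟨h₁, h₂⟩, h₃⟩ := hcpt.exists_isMinOn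
    (f := fun k => ((A - blockPart c (k * M * kᴴ)) * (A - blockPart c (k * M * kᴴ))).trace.re)
    ⟨1, by simp, by simp⟩
    (Complex.continuous_re.comp (hcont.matrix_mul hcont).matrix_trace).continuousOn
  exact ⟨k₀, Matrix.mem_unitaryGroup_iff'.2 h₁, h₂, fun k hk hJk =>
    h₃ ⟨Matrix.mem_unitaryGroup_iff'.1 hk, hJk⟩⟩

theorem Matrix.conj_mul_conj {v : Matrix ι ι ℂ} (hv : v * vᴴ = 1) (X Y : Matrix ι ι ℂ) :
    (vᴴ * X * v) * (vᴴ * Y * v) = vᴴ * (X * Y) * v := by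
  calc (vᴴ * X * v) * (vᴴ * Y * v) = vᴴ * X * (v * vᴴ) * Y * v := by
        simp only [Matrix.mul_assoc]
    _ = _ := by rw [hv, Matrix.mul_one]; simp only [Matrix.mul_assoc]

omit [DecidableEq ι] in
theorem Matrix.conj_conjTranspose (v X : Matrix ι ι ℂ) : (vᴴ * X * v)ᴴ = vᴴ * Xᴴ * v := by
  rw [Matrix.conjTranspose_mul, Matrix.conjTranspose_mul, Matrix.conjTranspose_conjTranspose,
    Matrix.mul_assoc]

/-- If an odd Hermitian matrix can be conjugated into one with given odd block-diagonal part, then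
the conjugating unitary can be chosen to be even. -/
theorem Matrix.exists_even_unitary_blockPart_eq {J A M : Matrix ι ι ℂ}
    (hJ : J * J = 1) (hJs : Jᴴ = J) (hJc : J.BlockSupported c)
    (hM : Mᴴ = M) (hA : Aᴴ = A) (hJM : J * M = -(M * J)) (hJA : J * A = -(A * J))
    (hAc : A.BlockSupported c)
    (hex : ∃ k ∈ Matrix.unitaryGroup ι ℂ, blockPart c (k * M * kᴴ) = A) :
    ∃ k ∈ Matrix.unitaryGroup ι ℂ, J * k = k * J ∧ blockPart c (k * M * kᴴ) = A := by
  obtain ⟨k₁, hk₁, hk₁A⟩ := hex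
  obtain ⟨k₀, hk₀, hJk₀, hmin₀⟩ := Matrix.exists_even_unitary_min c J A M
  refine ⟨k₀, hk₀, hJk₀, ?_⟩
  have hk₀' : k₀ᴴ * k₀ = 1 := Matrix.mem_unitaryGroup_iff'.1 hk₀
  have hk₀k : k₀ * k₀ᴴ = 1 := Matrix.mem_unitaryGroup_iff.1 hk₀
  have hconjJ : ∀ k ∈ Matrix.unitaryGroup ι ℂ, J * k = k * J → J * kᴴ = kᴴ * J := by
    intro k _ h
    have := congrArg conjTranspose h
    rw [Matrix.conjTranspose_mul, Matrix.conjTranspose_mul, hJs] at this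
    exact this.symm
  set M₀ := k₀ * M * k₀ᴴ with hM₀
  have hM₀s : M₀ᴴ = M₀ := by
    rw [hM₀, Matrix.conjTranspose_mul, Matrix.conjTranspose_mul,
      Matrix.conjTranspose_conjTranspose, hM, Matrix.mul_assoc]
  have hJM₀ : J * M₀ = -(M₀ * J) := by
    rw [hM₀, Matrix.mul_assoc (k₀ * M), ← hconjJ k₀ hk₀ hJk₀, ← Matrix.mul_assoc,
      ← Matrix.mul_assoc,
      hJk₀, Matrix.mul_assoc k₀ J, hJM, Matrix.mul_neg, Matrix.neg_mul]
    simp only [Matrix.mul_assoc]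
  have hMk₁ : ∃ k ∈ Matrix.unitaryGroup ι ℂ, blockPart c (k * M₀ * kᴴ) = A := by
    refine ⟨k₁ * k₀ᴴ, mul_mem hk₁ (Unitary.star_mem hk₀), ?_⟩
    rw [← hk₁A, hM₀, Matrix.conjTranspose_mul, Matrix.conjTranspose_conjTranspose]
    congr 1
    calc k₁ * k₀ᴴ * (k₀ * M * k₀ᴴ) * (k₀ * k₁ᴴ)
        = k₁ * (k₀ᴴ * k₀) * M * (k₀ᴴ * k₀) * k₁ᴴ := by simp only [Matrix.mul_assoc]
      _ = _ := by rw [hk₀', Matrix.mul_one, Matrix.mul_one]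
  set D := A - blockPart c M₀ with hD
  have hmin : ∀ k ∈ Matrix.unitaryGroup ι ℂ, ∀ h ∈ Matrix.unitaryGroup ι ℂ, J * k = k * J →
      J * h = h * J → h.BlockSupported c → (D * D).trace.re ≤
        ((h * A * hᴴ - blockPart c (k * M₀ * kᴴ)) *
          (h * A * hᴴ - blockPart c (k * M₀ * kᴴ))).trace.re := by
    intro k hk h hh hJk hJh hhc
    have hh' : hᴴ * h = 1 := Matrix.mem_unitaryGroup_iff'.1 hh
    have hhh : h * hᴴ = 1 := Matrix.mem_unitaryGroup_iff.1 hh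
    refine (hmin₀ (hᴴ * k * k₀) (mul_mem (mul_mem (Unitary.star_mem hh) hk) hk₀) (by
      rw [← Matrix.mul_assoc, ← Matrix.mul_assoc, hconjJ h hh hJh, Matrix.mul_assoc hᴴ, hJk,
        ← Matrix.mul_assoc, Matrix.mul_assoc _ J, hJk₀, ← Matrix.mul_assoc])).trans (le_of_eq ?_)
    have heq : A - blockPart c (hᴴ * k * k₀ * M * (hᴴ * k * k₀)ᴴ) =
        hᴴ * (h * A * hᴴ - blockPart c (k * M₀ * kᴴ)) * h := by
      have h1 : hᴴ * k * k₀ * M * (hᴴ * k * k₀)ᴴ = hᴴ * (k * M₀ * kᴴ) * h := by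
        rw [hM₀, Matrix.conjTranspose_mul, Matrix.conjTranspose_mul,
          Matrix.conjTranspose_conjTranspose]
        simp only [Matrix.mul_assoc]
      have h2 : hᴴ * (h * A * hᴴ) * h = A := by
        calc _ = (hᴴ * h) * A * (hᴴ * h) := by simp only [Matrix.mul_assoc]
          _ = A := by rw [hh', Matrix.mul_one, Matrix.one_mul]
      rw [h1, blockPart_mul_right hhc, blockPart_mul_left hhc.conjTranspose, Matrix.mul_sub,
        Matrix.sub_mul, h2]
    rw [heq, Matrix.conj_mul_conj hhh, Matrix.trace_mul_comm, ← Matrix.mul_assoc, hhh,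
      Matrix.one_mul]
  have hJD : J * D = -(D * J) := by
    rw [hD, Matrix.mul_sub, Matrix.sub_mul, hJA, ← blockPart_mul_left hJc, hJM₀, blockPart_neg,
      blockPart_mul_right hJc]
    abel
  have hDs : Dᴴ = D := by
    rw [hD, Matrix.conjTranspose_sub, hA, ← blockPart_conjTranspose, hM₀s]
  have hDc : D.BlockSupported c := hAc.sub (blockPart_supported c M₀)
  obtain ⟨hMD, hAD⟩ := Matrix.commute_of_min hM₀s hA hJM₀ hJA hJD hDs hAc hDc
    (fun hK hH hJK hJH hHc => (Matrix.commutator_variation hD hmin hK hH hJK hJH hHc).1)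
  obtain ⟨v₁, d, hv₁, hv₁c, hDd⟩ := Matrix.IsHermitian.exists_unitary_blockSupported hDs hDc
  have hv₁' : v₁ᴴ * v₁ = 1 := Matrix.mem_unitaryGroup_iff'.1 hv₁
  have hv₁v : v₁ * v₁ᴴ = 1 := Matrix.mem_unitaryGroup_iff.1 hv₁
  have hDd' : v₁ᴴ * D * v₁ = diagonal fun i => (d i : ℂ) := by
    calc v₁ᴴ * D * v₁ = (v₁ᴴ * v₁) * diagonal (fun i => (d i : ℂ)) * (v₁ᴴ * v₁) := by
          conv_lhs => rw [hDd]
          simp only [Matrix.mul_assoc]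
      _ = _ := by rw [hv₁', Matrix.mul_one, Matrix.one_mul]
  have hA₁d : (v₁ᴴ * A * v₁).BlockSupported d := by
    rw [blockSupported_ofReal_iff, ← hDd', Matrix.conj_mul_conj hv₁v,
      Matrix.conj_mul_conj hv₁v, hAD]
  have hA₁c : (v₁ᴴ * A * v₁).BlockSupported c := (hv₁c.conjTranspose.mul hAc).mul hv₁c
  obtain ⟨v₂, a, hv₂, hv₂cd, hAa⟩ := Matrix.IsHermitian.exists_unitary_blockSupported
    (f := fun i => (c i, d i)) (X := v₁ᴴ * A * v₁)
    (by rw [Matrix.IsHermitian, Matrix.conj_conjTranspose, hA])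
    (fun i j hij => Prod.ext (hA₁c i j hij) (hA₁d i j hij))
  have hv₂c : v₂.BlockSupported c := fun i j hij => congrArg Prod.fst (hv₂cd i j hij)
  have hv₂d : v₂.BlockSupported d := fun i j hij => congrArg Prod.snd (hv₂cd i j hij)
  have hv₂' : v₂ᴴ * v₂ = 1 := Matrix.mem_unitaryGroup_iff'.1 hv₂
  set v := v₁ * v₂ with hv
  have hvu : v ∈ Matrix.unitaryGroup ι ℂ := mul_mem hv₁ hv₂
  have hv' : vᴴ * v = 1 := Matrix.mem_unitaryGroup_iff'.1 hvu
  have hvv : v * vᴴ = 1 := Matrix.mem_unitaryGroup_iff.1 hvu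
  have hvc : v.BlockSupported c := hv₁c.mul hv₂c
  have hvconj : ∀ X : Matrix ι ι ℂ, vᴴ * X * v = v₂ᴴ * (v₁ᴴ * X * v₁) * v₂ := by
    intro X
    rw [hv, Matrix.conjTranspose_mul]
    simp only [Matrix.mul_assoc]
  have hvA : vᴴ * A * v = diagonal fun i => (a i : ℂ) := by
    rw [hvconj, hAa]
    calc _ = (v₂ᴴ * v₂) * diagonal (fun i => (a i : ℂ)) * (v₂ᴴ * v₂) := by
          simp only [Matrix.mul_assoc]
      _ = _ := by rw [hv₂', Matrix.mul_one, Matrix.one_mul]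
  have hvD : vᴴ * D * v = diagonal fun i => (d i : ℂ) := by
    rw [hvconj, hDd', Matrix.mul_assoc, ← blockSupported_ofReal_iff.1 hv₂d, ← Matrix.mul_assoc,
      hv₂', Matrix.one_mul]
  obtain ⟨u, m, hu, hud, hMm⟩ := Matrix.IsHermitian.exists_unitary_blockSupported
    (f := d) (X := vᴴ * M₀ * v)
    (by rw [Matrix.IsHermitian, Matrix.conj_conjTranspose, hM₀s])
    (by rw [blockSupported_ofReal_iff, ← hvD, Matrix.conj_mul_conj hvv, Matrix.conj_mul_conj hvv,
      hMD])
  have huu : u * uᴴ = 1 := Matrix.mem_unitaryGroup_iff.1 hu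
  have hblock : ∀ X : Matrix ι ι ℂ, blockPart c (vᴴ * X * v) = vᴴ * blockPart c X * v := by
    intro X
    rw [blockPart_mul_right hvc, blockPart_mul_left hvc.conjTranspose]
  have hback : ∀ X : Matrix ι ι ℂ, v * (vᴴ * X * v) * vᴴ = X := by
    intro X
    calc _ = (v * vᴴ) * X * (v * vᴴ) := by simp only [Matrix.mul_assoc]
      _ = _ := by rw [hvv, Matrix.mul_one, Matrix.one_mul]
  have hback' : ∀ X : Matrix ι ι ℂ, vᴴ * (v * X * vᴴ) * v = X := by
    intro X
    calc _ = (vᴴ * v) * X * (vᴴ * v) := by simp only [Matrix.mul_assoc]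
      _ = _ := by rw [hv', Matrix.mul_one, Matrix.one_mul]
  have hneg : ∀ X : Matrix ι ι ℂ, vᴴ * (-X) * v = -(vᴴ * X * v) := by
    intro X
    rw [Matrix.mul_neg, Matrix.neg_mul]
  have hsub : ∀ X Y : Matrix ι ι ℂ, vᴴ * X * v - vᴴ * Y * v = vᴴ * (X - Y) * v := by
    intro X Y
    rw [Matrix.mul_sub, Matrix.sub_mul]
  obtain ⟨k, hk, hkA⟩ := hMk₁
  have hd := Matrix.defect_eq_zero_of_diagonal (c := c) (a := a) (d := d) (m := m) (u := u)
    (J := vᴴ * J * v) (k := vᴴ * k * v * u) huu hud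
    (by rw [Matrix.conj_mul_conj hvv, hJ, Matrix.mul_one, hv'])
    (by rw [Matrix.conj_conjTranspose, hJs])
    ((hvc.conjTranspose.mul hJc).mul hvc)
    (by rw [← hvD, Matrix.conj_mul_conj hvv, Matrix.conj_mul_conj hvv, hJD, hneg])
    (by rw [← hvA, Matrix.conj_mul_conj hvv, Matrix.conj_mul_conj hvv, hJA, hneg])
    (by rw [← hMm, Matrix.conj_mul_conj hvv, Matrix.conj_mul_conj hvv, hJM₀, hneg])
    (by
      intro K H hK hH hJK hJH hHc M' A' D' hM' hA' hD' hKH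
      rw [← hMm] at hM'
      rw [← hvA] at hA'
      rw [← hvD] at hD'
      obtain ⟨K, rfl⟩ : ∃ K₁, K = vᴴ * K₁ * v := ⟨v * K * vᴴ, (hback' K).symm⟩
      obtain ⟨H, rfl⟩ : ∃ H₁, H = vᴴ * H₁ * v := ⟨v * H * vᴴ, (hback' H).symm⟩
      have hinj : ∀ {X Y : Matrix ι ι ℂ}, vᴴ * X * v = vᴴ * Y * v → X = Y := by
        intro X Y hXY
        rw [← hback X, hXY, hback]
      subst hM' hA' hD'
      simp only [Matrix.conj_mul_conj hvv, hsub, hblock] at hKH hJK hJH ⊢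
      rw [Matrix.conj_conjTranspose, ← hneg] at hK hH
      have := (Matrix.commutator_variation hD hmin (hinj hK) (hinj hH) (hinj hJK) (hinj hJH)
        (by
          rw [← hback H]
          exact (hvc.mul hHc).mul hvc.conjTranspose)).2 (hinj hKH)
      rwa [Matrix.trace_mul_comm, ← Matrix.mul_assoc, hvv, Matrix.one_mul])
    (by rw [← hvA, ← hvD, ← hMm, hblock, hsub])
    (mul_mem (mul_mem (mul_mem (Unitary.star_mem hvu) hk) hvu) hu)
    (by
      rw [← hvA, ← hkA, ← hblock]
      congr 1
      calc vᴴ * k * v * u * diagonal (fun i => (m i : ℂ)) * (vᴴ * k * v * u)ᴴ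
          = (vᴴ * k * v) * (u * diagonal (fun i => (m i : ℂ)) * uᴴ) * (vᴴ * k * v)ᴴ := by
            rw [Matrix.conjTranspose_mul (vᴴ * k * v)]
            simp only [Matrix.mul_assoc]
        _ = _ := by
            rw [← hMm, Matrix.conj_conjTranspose, Matrix.conj_mul_conj hvv,
              Matrix.conj_mul_conj hvv])
  have hD0 : D = 0 := by
    rw [← hback D, hvD]
    simp only [hd, Complex.ofReal_zero, Matrix.diagonal_zero, Matrix.mul_zero, Matrix.zero_mul]
  exact (sub_eq_zero.1 hD0).symm

end OddConjugation

section Spectrum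

open Polynomial

theorem Antitone.eq_of_prod_X_sub_C_eq {k : ℕ} {f g : Fin k → ℝ} (hf : Antitone f)
    (hg : Antitone g) (h : ∏ i, (X - C (f i : ℂ)) = ∏ i, (X - C (g i : ℂ))) : f = g := by
  have hroots : ∀ f : Fin k → ℝ, (∏ i, (X - C (f i : ℂ))).roots =
      (List.ofFn f : Multiset ℝ).map Complex.ofReal := by
    intro f
    have := roots_multiset_prod_X_sub_C ((List.ofFn f : Multiset ℝ).map Complex.ofReal)
    rw [← this, ← Fin.univ_val_map, Multiset.map_map, Multiset.map_map]
    rfl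
  have h' := congrArg roots h
  rw [hroots, hroots] at h'
  have hperm := Multiset.coe_eq_coe.1 (Multiset.map_injective Complex.ofReal_injective h')
  exact List.ofFn_injective (hperm.eq_of_pairwise' (r := (· ≥ ·))
    hf.sortedGE_ofFn.pairwise hg.sortedGE_ofFn.pairwise)

theorem antitone_eigVec {k : ℕ} {A : Matrix (Fin k) (Fin k) ℂ} (hA : A.IsHermitian) :
    Antitone (eigVec A hA) := fun _ _ hij =>
  Tuple.monotone_sort hA.eigenvalues (Fin.rev_le_rev.2 hij)

theorem charpoly_eq_prod_eigVec {k : ℕ} {A : Matrix (Fin k) (Fin k) ℂ} (hA : A.IsHermitian) :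
    A.charpoly = ∏ i, (X - C (eigVec A hA i : ℂ)) := by
  rw [hA.charpoly_eq]
  exact ((Fin.revPerm.trans (Tuple.sort hA.eigenvalues)).prod_comp
    fun i => X - C (hA.eigenvalues i : ℂ)).symm

theorem eigVec_eq_iff {k : ℕ} {A : Matrix (Fin k) (Fin k) ℂ} (hA : A.IsHermitian)
    {f : Fin k → ℝ} (hf : Antitone f) :
    eigVec A hA = f ↔ A.charpoly = ∏ i, (X - C (f i : ℂ)) := by
  rw [charpoly_eq_prod_eigVec hA]
  exact ⟨fun h => by rw [h], (antitone_eigVec hA).eq_of_prod_X_sub_C_eq hf⟩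

theorem hatPQ_antitone {p q : ℕ} {s : Fin q → ℝ} (hs : Antitone s)
    (hs0 : ∀ i, 0 ≤ s i) : Antitone (hatPQ p q s) := by
  intro i j hij
  have hij' : (i : ℕ) ≤ j := hij
  unfold hatPQ
  split_ifs <;> first
    | omega
    | exact le_rfl
    | exact hs hij
    | exact hs0 _
    | exact neg_nonpos.2 (hs0 _)
    | exact (neg_nonpos.2 (hs0 _)).trans (hs0 _)
    | exact neg_le_neg (hs (by rw [Fin.mk_le_mk]; omega))

theorem hatPQ_apply_of_lt {p q : ℕ} (s : Fin q → ℝ) (i : Fin q) (h : (i : ℕ) < p + q) :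
    hatPQ p q s ⟨i, h⟩ = s i := by
  simp [hatPQ]

theorem prod_hatPQ {p q : ℕ} (hpq : q ≤ p) (s : Fin q → ℝ) {R : Type*} [CommMonoid R]
    (F : ℝ → R) : ∏ i, F (hatPQ p q s i) = F 0 ^ (p - q) * ∏ i, (F (s i) * F (-s i)) := by
  obtain ⟨r, rfl⟩ := Nat.exists_eq_add_of_le hpq
  rw [Fin.prod_univ_add, Fin.prod_univ_add, Finset.prod_mul_distrib,
    ← Equiv.prod_comp Fin.revPerm fun i => F (-s i)]
  have h₁ : ∀ i : Fin q, hatPQ (q + r) q s (Fin.castAdd q (Fin.castAdd r i)) = s i := by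
    intro i
    simp [hatPQ]
  have h₂ : ∀ i : Fin r, hatPQ (q + r) q s (Fin.castAdd q (Fin.natAdd q i)) = 0 := by
    intro i
    simp [hatPQ]
  have h₃ : ∀ i : Fin q, hatPQ (q + r) q s (Fin.natAdd (q + r) i) = -s i.rev := by
    intro i
    have h : ¬ q + r + (i : ℕ) < q := by omega
    simp only [hatPQ, Fin.val_natAdd, h, dif_neg, not_false_eq_true]
    rw [dif_neg (by omega)]
    congr 2
    ext
    simp only [Fin.val_rev]
    omega
  simp_rw [h₁, h₂, h₃]
  simp only [Finset.prod_const, Finset.card_univ, Fintype.card_fin, Nat.add_sub_cancel_left,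
    Fin.revPerm_apply]
  rw [mul_comm (∏ i, F (s i)), mul_assoc]

end Spectrum

section SingularValues

open Polynomial

theorem Matrix.charpoly_fromBlocks_zero_diag {R α β : Type*} [CommRing R] [Fintype α]
    [DecidableEq α] [Fintype β] [DecidableEq β] (A : Matrix α β R) (B : Matrix β α R) :
    (fromBlocks 0 A B 0).charpoly * X ^ Fintype.card β =
      X ^ Fintype.card α * (B * A).charpoly.comp (X ^ 2) := by
  have h₁ : (fromBlocks 0 A B 0).charmatrix * fromBlocks 1 (A.map C) 0 (scalar β X) =
      fromBlocks (scalar α X) 0 (-B.map C)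
        ((B * A).charmatrix.map (compRingHom (X ^ 2 : R[X]))) := by
    rw [charmatrix_fromBlocks, fromBlocks_multiply]
    congr 1
    · simp [charmatrix]
    · ext i j : 2
      simp [charmatrix]
    · simp
    · ext i j : 2
      have : (charmatrix (0 : Matrix β β R)) = scalar β X := by simp [charmatrix]
      rw [this, ← map_mul, ← pow_two]
      simp only [charmatrix, Matrix.add_apply, Matrix.neg_mul, Matrix.neg_apply, map_apply,
        Matrix.sub_apply, RingHom.mapMatrix_apply, map_sub, coe_compRingHom_apply, C_comp,
        ← Matrix.map_mul]
      by_cases hij : i = j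
      · subst hij
        simp
        ring
      · simp [hij]
  have h₂ := congrArg det h₁
  rw [det_mul, det_fromBlocks_zero₂₁, det_fromBlocks_zero₁₂, det_one, one_mul] at h₂
  rw [← RingHom.mapMatrix_apply, ← RingHom.map_det] at h₂
  simpa [charpoly] using h₂

open scoped ComplexOrder in
theorem eigVec_mul_conjTranspose_nonneg {k l : ℕ} (Y : Matrix (Fin k) (Fin l) ℂ) (i : Fin k) :
    0 ≤ eigVec (Y * Yᴴ) (isHermitian_mul_conjTranspose_self Y) i :=
  (posSemidef_self_mul_conjTranspose Y).eigenvalues_nonneg _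

theorem sval_apply {p q : ℕ} (Y : Matrix (Fin p) (Fin q) ℂ) (i : Fin p) :
    sval Y i = √(eigVec (Y * Yᴴ) (isHermitian_mul_conjTranspose_self Y) i) := by
  rw [sval, dif_pos i.isLt]

theorem sval_nonneg {p q : ℕ} (Y : Matrix (Fin p) (Fin q) ℂ) (i : ℕ) : 0 ≤ sval Y i := by
  rw [sval]
  split_ifs
  · exact Real.sqrt_nonneg _
  · exact le_rfl

theorem antitone_sval {p q : ℕ} (Y : Matrix (Fin p) (Fin q) ℂ) : Antitone (sval Y) := by
  intro i j hij
  by_cases hj : j < p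
  · have h := antitone_eigVec (isHermitian_mul_conjTranspose_self Y)
      (show (⟨i, hij.trans_lt hj⟩ : Fin p) ≤ ⟨j, hj⟩ from hij)
    rw [sval, sval, dif_pos hj, dif_pos (hij.trans_lt hj)]
    exact Real.sqrt_le_sqrt h
  · rw [show sval Y j = 0 by rw [sval, dif_neg hj]]
    exact sval_nonneg Y i

theorem charpoly_conjTranspose_mul_self_eq_prod_sval {p q : ℕ} (Y : Matrix (Fin p) (Fin q) ℂ) :
    (Yᴴ * Y).charpoly = ∏ i : Fin q, (X - C ((sval Yᴴ i ^ 2 : ℝ) : ℂ)) := by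
  have h := charpoly_eq_prod_eigVec (isHermitian_mul_conjTranspose_self Yᴴ)
  simp only [conjTranspose_conjTranspose] at h
  rw [h]
  refine Finset.prod_congr rfl fun i _ => ?_
  rw [sval_apply, Real.sq_sqrt (eigVec_mul_conjTranspose_nonneg Yᴴ i)]
  simp only [conjTranspose_conjTranspose]

theorem sval_conjTranspose {p q : ℕ} (hpq : q ≤ p) (Y : Matrix (Fin p) (Fin q) ℂ) (i : Fin q) :
    sval Yᴴ i = sval Y i := by
  have hanti : Antitone fun j : Fin p => sval Yᴴ j ^ 2 := fun j k hjk =>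
    pow_le_pow_left₀ (sval_nonneg _ _) (antitone_sval Yᴴ hjk) 2
  have h : (Y * Yᴴ).charpoly = ∏ i : Fin p, (X - C ((sval Yᴴ i ^ 2 : ℝ) : ℂ)) := by
    rw [charpoly_mul_comm_of_le Y Yᴴ (by simpa using hpq),
      charpoly_conjTranspose_mul_self_eq_prod_sval]
    obtain ⟨r, rfl⟩ := Nat.exists_eq_add_of_le hpq
    rw [Fin.prod_univ_add, mul_comm]
    congr 1
    have h₀ : ∀ j : Fin r, sval Yᴴ (q + j) = 0 := fun j => by simp [sval]
    simp [h₀]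
  have h' := congrFun ((eigVec_eq_iff (isHermitian_mul_conjTranspose_self Y) hanti).2 h)
    (Fin.castLE hpq i)
  have h'' := sval_apply Y (Fin.castLE hpq i)
  rw [h', Real.sqrt_sq (sval_nonneg _ _)] at h''
  exact h''.symm

theorem charpoly_fromBlocks_eq_prod_hatPQ {p q : ℕ} (hpq : q ≤ p)
    (Y : Matrix (Fin p) (Fin q) ℂ) : (fromBlocks 0 Y Yᴴ 0).charpoly =
      ∏ i, (X - C (hatPQ p q (fun i => sval Y i) i : ℂ)) := by
  rw [prod_hatPQ hpq (fun i => sval Y i) fun x => X - C (x : ℂ)]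
  have h := charpoly_fromBlocks_zero_diag Y Yᴴ
  rw [charpoly_conjTranspose_mul_self_eq_prod_sval, Fintype.card_fin, Fintype.card_fin] at h
  refine mul_right_cancel₀ (pow_ne_zero q (X_ne_zero (R := ℂ))) (h.trans ?_)
  rw [mul_right_comm, Complex.ofReal_zero, C_0, sub_zero, ← pow_add, Nat.sub_add_cancel hpq,
    prod_comp]
  congr 1
  refine Finset.prod_congr rfl fun i _ => ?_
  rw [sval_conjTranspose hpq]
  simp
  ring

theorem hatPQ_sval_antitone {p q : ℕ} (Y : Matrix (Fin p) (Fin q) ℂ) :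
    Antitone (hatPQ p q fun i => sval Y i) :=
  hatPQ_antitone (fun _ _ h => antitone_sval Y h) fun _ => sval_nonneg _ _

theorem sval_eq_of_charpoly_fromBlocks_eq {p q : ℕ} (hpq : q ≤ p) {Y : Matrix (Fin p) (Fin q) ℂ}
    {s : Fin q → ℝ} (hs : Antitone s) (hs0 : ∀ i, 0 ≤ s i)
    (h : (fromBlocks 0 Y Yᴴ 0).charpoly = ∏ i, (X - C (hatPQ p q s i : ℂ))) (i : Fin q) :
    s i = sval Y i := by
  rw [charpoly_fromBlocks_eq_prod_hatPQ hpq] at h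
  have h' := congrFun ((hatPQ_sval_antitone Y).eq_of_prod_X_sub_C_eq (hatPQ_antitone hs hs0) h)
    ⟨i, by omega⟩
  rw [hatPQ_apply_of_lt, hatPQ_apply_of_lt] at h'
  exact h'.symm

theorem exists_charpoly_fromBlocks_eq_prod_hatPQ {p q : ℕ} (hpq : q ≤ p) (s : Fin q → ℝ) :
    ∃ Y : Matrix (Fin p) (Fin q) ℂ,
      (fromBlocks 0 Y Yᴴ 0).charpoly = ∏ i, (X - C (hatPQ p q s i : ℂ)) := by
  refine ⟨of fun i j => if i = Fin.castLE hpq j then (s j : ℂ) else 0, ?_⟩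
  set Y : Matrix (Fin p) (Fin q) ℂ := of fun i j => if i = Fin.castLE hpq j then (s j : ℂ) else 0
    with hY
  have hYY : Yᴴ * Y = diagonal fun i => (s i : ℂ) ^ 2 := by
    ext i j
    rw [mul_apply, Finset.sum_eq_single (Fin.castLE hpq j)]
    · by_cases hij : i = j
      · subst hij
        simp [hY, pow_two]
      · have : Fin.castLE hpq j ≠ Fin.castLE hpq i := fun h =>
          hij (Fin.castLE_injective hpq h).symm
        simp [hY, hij, this]
    · intro k _ hk
      simp [hY, hk]
    · simp
  rw [prod_hatPQ hpq s fun x => X - C (x : ℂ)]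
  have h := charpoly_fromBlocks_zero_diag Y Yᴴ
  rw [hYY, charpoly_diagonal, Fintype.card_fin, Fintype.card_fin] at h
  refine mul_right_cancel₀ (pow_ne_zero q (X_ne_zero (R := ℂ))) (h.trans ?_)
  rw [mul_right_comm, Complex.ofReal_zero, C_0, sub_zero, ← pow_add, Nat.sub_add_cancel hpq,
    prod_comp]
  congr 1
  refine Finset.prod_congr rfl fun i _ => ?_
  simp
  ring

end SingularValues

section Corner

variable {α β ι : Type*} [Fintype α] [DecidableEq α] [Fintype β] [DecidableEq β]
  [Fintype ι] [DecidableEq ι]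

theorem Matrix.IsHermitian.exists_unitary_conj_eq {A B : Matrix ι ι ℂ} (hA : A.IsHermitian)
    (hB : B.IsHermitian) (h : A.charpoly = B.charpoly) :
    ∃ u ∈ unitaryGroup ι ℂ, B = u * A * uᴴ := by
  have hev := (hA.eigenvalues_eq_eigenvalues_iff hB).2 h
  have h₁ := hA.spectral_theorem
  have h₂ := hB.spectral_theorem
  rw [Unitary.conjStarAlgAut_apply] at h₁ h₂
  rw [← hev] at h₂
  set u := hA.eigenvectorUnitary
  set v := hB.eigenvectorUnitary
  have hu : (star (u : Matrix ι ι ℂ)) * u = 1 := Unitary.coe_star_mul_self u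
  refine ⟨v * star (u : Matrix ι ι ℂ), mul_mem v.2 (star u).2, ?_⟩
  rw [h₂, ← star_eq_conjTranspose, star_mul, star_star]
  conv_rhs => rw [h₁]
  calc _ = (v : Matrix ι ι ℂ) * 1 * diagonal (RCLike.ofReal ∘ hA.eigenvalues) * 1 *
        star (v : Matrix ι ι ℂ) := by rw [mul_one, mul_one]
    _ = _ := by rw [← hu]; simp only [mul_assoc]

/-- The involution exchanging the second halves of the two copies of `α ⊕ β`. -/
def cornerSwap : (α ⊕ β) ⊕ (α ⊕ β) → (α ⊕ β) ⊕ (α ⊕ β)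
  | .inl (.inl i) => .inl (.inl i)
  | .inl (.inr j) => .inr (.inr j)
  | .inr (.inl i) => .inr (.inl i)
  | .inr (.inr j) => .inl (.inr j)

omit [Fintype α] [DecidableEq α] [Fintype β] [DecidableEq β] in
theorem cornerSwap_involutive :
    Function.Involutive (cornerSwap : (α ⊕ β) ⊕ (α ⊕ β) → (α ⊕ β) ⊕ (α ⊕ β)) := by
  rintro ((i | j) | (i | j)) <;> rfl

theorem charpoly_submatrix_cornerSwap
    (M : Matrix ((α ⊕ β) ⊕ (α ⊕ β)) ((α ⊕ β) ⊕ (α ⊕ β)) ℂ) :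
    (M.submatrix cornerSwap cornerSwap).charpoly = M.charpoly :=
  charpoly_reindex cornerSwap_involutive.toPerm M

omit [Fintype α] [DecidableEq α] [Fintype β] [DecidableEq β] in
theorem isHermitian_fromBlocks_zero (Y : Matrix α β ℂ) : (fromBlocks 0 Y Yᴴ 0).IsHermitian := by
  rw [IsHermitian, fromBlocks_conjTranspose]
  simp

omit [Fintype α] [DecidableEq α] [Fintype β] [DecidableEq β] in
theorem toBlocks₁₁_submatrix_cornerSwap (Z : Matrix (α ⊕ β) (α ⊕ β) ℂ) :
    ((fromBlocks 0 Z Zᴴ 0).submatrix cornerSwap cornerSwap).toBlocks₁₁ =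
      fromBlocks 0 Z.toBlocks₁₂ Z.toBlocks₁₂ᴴ 0 := by
  ext (i | i) (j | j) <;> rfl

omit [Fintype α] [DecidableEq α] [Fintype β] [DecidableEq β] in
theorem toBlocks₂₂_submatrix_cornerSwap (Z : Matrix (α ⊕ β) (α ⊕ β) ℂ) :
    ((fromBlocks 0 Z Zᴴ 0).submatrix cornerSwap cornerSwap).toBlocks₂₂ =
      fromBlocks 0 Z.toBlocks₂₁ᴴ Z.toBlocks₂₁ 0 := by
  ext (i | i) (j | j) <;> simp [cornerSwap, toBlocks₂₂, toBlocks₂₁]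

theorem exists_corners_eq_of_charpoly_eq
    {M : Matrix ((α ⊕ β) ⊕ (α ⊕ β)) ((α ⊕ β) ⊕ (α ⊕ β)) ℂ} (hM : M.IsHermitian)
    {Z : Matrix (α ⊕ β) (α ⊕ β) ℂ} {S T : Matrix α β ℂ}
    (h₀ : M.charpoly = (fromBlocks 0 Z Zᴴ 0).charpoly)
    (h₁ : M.toBlocks₁₁.charpoly = (fromBlocks 0 S Sᴴ 0).charpoly)
    (h₂ : M.toBlocks₂₂.charpoly = (fromBlocks 0 T Tᴴ 0).charpoly) :
    ∃ W : Matrix (α ⊕ β) (α ⊕ β) ℂ,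
      (fromBlocks 0 W Wᴴ 0).charpoly = (fromBlocks 0 Z Zᴴ 0).charpoly ∧
        W.toBlocks₁₂ = S ∧ W.toBlocks₂₁ = Tᴴ := by
  set G := (fromBlocks 0 Z Zᴴ 0).submatrix cornerSwap cornerSwap with hG
  have hGh : G.IsHermitian := (isHermitian_fromBlocks_zero Z).submatrix _
  obtain ⟨u, hu, hMu⟩ := hGh.exists_unitary_conj_eq hM
    ((charpoly_submatrix_cornerSwap _).trans h₀.symm)
  obtain ⟨u₁, hu₁, hS⟩ := (show M.toBlocks₁₁.IsHermitian from
    hM.submatrix Sum.inl).exists_unitary_conj_eq (isHermitian_fromBlocks_zero S) h₁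
  obtain ⟨u₂, hu₂, hT⟩ := (show M.toBlocks₂₂.IsHermitian from
    hM.submatrix Sum.inr).exists_unitary_conj_eq (isHermitian_fromBlocks_zero T) h₂
  let ε : (α ⊕ β) ⊕ (α ⊕ β) → ℂ := fun x => Sum.elim (fun _ => 1) (fun _ => -1) (cornerSwap x)
  have hε : ∀ x, ε x * ε x = 1 := by rintro ((i | j) | (i | j)) <;> simp [ε, cornerSwap]
  let c : (α ⊕ β) ⊕ (α ⊕ β) → Bool := Sum.isLeft
  have hc : ∀ (N : Matrix ((α ⊕ β) ⊕ (α ⊕ β)) ((α ⊕ β) ⊕ (α ⊕ β)) ℂ) (x y),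
      c x = c y → blockPart c N x y = N x y := fun N _ _ h => blockPart_apply_of_eq N h
  let A : Matrix ((α ⊕ β) ⊕ (α ⊕ β)) ((α ⊕ β) ⊕ (α ⊕ β)) ℂ :=
    fromBlocks (fromBlocks 0 S Sᴴ 0) 0 0 (fromBlocks 0 T Tᴴ 0)
  let H : Matrix ((α ⊕ β) ⊕ (α ⊕ β)) ((α ⊕ β) ⊕ (α ⊕ β)) ℂ := fromBlocks u₁ 0 0 u₂
  have hH : H ∈ unitaryGroup _ ℂ := by
    rw [mem_unitaryGroup_iff, star_eq_conjTranspose] at hu₁ hu₂ ⊢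
    simp [H, fromBlocks_conjTranspose, fromBlocks_multiply, hu₁, hu₂]
  have hHA : blockPart c (H * M * Hᴴ) = A := by
    rw [← fromBlocks_toBlocks M]
    simp only [H, A, fromBlocks_conjTranspose, fromBlocks_multiply, conjTranspose_zero,
      Matrix.mul_zero, Matrix.zero_mul, add_zero, zero_add, ← hS, ← hT]
    ext (x | x) (y | y)
    · exact hc _ (.inl x) (.inl y) rfl
    · exact blockPart_apply_of_ne _ (by simp [c])
    · exact blockPart_apply_of_ne _ (by simp [c])
    · exact hc _ (.inr x) (.inr y) rfl
  have hJs : (diagonal ε)ᴴ = diagonal ε := by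
    rw [diagonal_conjTranspose]
    congr 1
    funext x
    rcases x with ((i | j) | (i | j)) <;> simp [ε, cornerSwap]
  have hJG : diagonal ε * G = -(G * diagonal ε) := by
    ext ((i | j) | (i | j)) ((k | l) | (k | l)) <;> simp [G, ε, cornerSwap]
  have hJA : diagonal ε * A = -(A * diagonal ε) := by
    ext ((i | j) | (i | j)) ((k | l) | (k | l)) <;> simp [A, ε, cornerSwap]
  have hJc : (diagonal ε).BlockSupported c := by
    intro x y hxy
    by_contra h
    exact hxy (diagonal_apply_ne _ fun h' => h (by rw [h']))
  have hAc : A.BlockSupported c := by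
    rintro (x | x) (y | y) hxy
    · rfl
    · exact absurd rfl hxy
    · exact absurd rfl hxy
    · rfl
  have hAh : Aᴴ = A := by
    simp only [A, fromBlocks_conjTranspose, conjTranspose_zero,
      (isHermitian_fromBlocks_zero _).eq]
  obtain ⟨k, hk, hJk, hkA⟩ := exists_even_unitary_blockPart_eq (by simp [hε]) hJs hJc hGh hAh
    hJG hJA hAc ⟨H * u, mul_mem hH hu, by
      rw [conjTranspose_mul, ← hHA, hMu]
      simp only [Matrix.mul_assoc]⟩
  have hkk : kᴴ * k = 1 := mem_unitaryGroup_iff'.1 hk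
  set N := k * G * kᴴ with hN
  have hNh : N.IsHermitian := isHermitian_mul_mul_conjTranspose k hGh
  have hNodd : ∀ x y, ε x * N x y = -(N x y * ε y) := by
    have hJk' : kᴴ * diagonal ε = diagonal ε * kᴴ := by
      simpa only [conjTranspose_mul, hJs] using congrArg conjTranspose hJk
    have hJN : diagonal ε * N = -(N * diagonal ε) := by
      rw [hN, ← Matrix.mul_assoc, ← Matrix.mul_assoc, hJk, Matrix.mul_assoc k, hJG,
        Matrix.mul_assoc _ kᴴ, hJk']
      simp only [Matrix.mul_neg, Matrix.neg_mul, Matrix.mul_assoc]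
    intro x y
    simpa using congrFun (congrFun hJN x) y
  have hNz : ∀ x y, ε x = ε y → N x y = 0 := by
    intro x y hxy
    have h := hNodd x y
    rw [← hxy, mul_comm (N x y), self_eq_neg] at h
    exact (mul_eq_zero.1 h).resolve_left fun h0 => by simpa [h0] using hε x
  refine ⟨(N.submatrix cornerSwap cornerSwap).toBlocks₁₂, ?_, ?_, ?_⟩
  · have hblocks : fromBlocks 0 (N.submatrix cornerSwap cornerSwap).toBlocks₁₂
        (N.submatrix cornerSwap cornerSwap).toBlocks₁₂ᴴ 0 =
        N.submatrix cornerSwap cornerSwap := by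
      ext (x | x) (y | y)
      · refine (hNz _ _ ?_).symm
        simp [ε, cornerSwap_involutive _]
      · rfl
      · exact hNh.apply _ _
      · refine (hNz _ _ ?_).symm
        simp [ε, cornerSwap_involutive _]
    rw [hblocks, charpoly_submatrix_cornerSwap, hN, charpoly_mul_comm, ← Matrix.mul_assoc, hkk,
      Matrix.one_mul, hG, charpoly_submatrix_cornerSwap]
  · ext i j
    have h := congrFun (congrFun hkA (.inl (.inl i))) (.inl (.inr j))
    exact (hc N (.inl (.inl i)) (.inl (.inr j)) rfl).symm.trans h
  · ext j i
    have h := congrFun (congrFun hkA (.inr (.inr j))) (.inr (.inl i))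
    exact (hc N (.inr (.inr j)) (.inr (.inl i)) rfl).symm.trans h

end Corner

section Reindex

open Polynomial

theorem charpoly_submatrix_equiv {α β : Type*} [Fintype α] [DecidableEq α] [Fintype β]
    [DecidableEq β] (e : α ≃ β) (M : Matrix β β ℂ) : (M.submatrix e e).charpoly = M.charpoly :=
  charpoly_reindex e.symm M

/-- The identification of the two-level block indices with `Fin ((p + q) + (p + q))`. -/
def finBlockEquiv (p q : ℕ) :
    (Fin p ⊕ Fin q) ⊕ (Fin p ⊕ Fin q) ≃ Fin ((p + q) + (p + q)) :=
  (finSumFinEquiv.sumCongr finSumFinEquiv).trans finSumFinEquiv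

theorem charpoly_castAdd_block {p q : ℕ}
    (M : Matrix (Fin ((p + q) + (p + q))) (Fin ((p + q) + (p + q))) ℂ) :
    (M.submatrix (finBlockEquiv p q) (finBlockEquiv p q)).toBlocks₁₁.charpoly =
      (M.submatrix (Fin.castAdd (p + q)) (Fin.castAdd (p + q))).charpoly := by
  rw [← charpoly_submatrix_equiv finSumFinEquiv (M.submatrix _ _)]
  rfl

theorem charpoly_natAdd_block {p q : ℕ}
    (M : Matrix (Fin ((p + q) + (p + q))) (Fin ((p + q) + (p + q))) ℂ) :
    (M.submatrix (finBlockEquiv p q) (finBlockEquiv p q)).toBlocks₂₂.charpoly =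
      (M.submatrix (Fin.natAdd (p + q)) (Fin.natAdd (p + q))).charpoly := by
  rw [← charpoly_submatrix_equiv finSumFinEquiv (M.submatrix _ _)]
  rfl

theorem charpoly_fromBlocks_submatrix {m : ℕ} {α : Type*} [Fintype α] [DecidableEq α]
    (e : α ≃ Fin m) (X : Matrix (Fin m) (Fin m) ℂ) :
    (fromBlocks 0 (X.submatrix e e) (X.submatrix e e)ᴴ 0).charpoly =
      (fromBlocks 0 X Xᴴ 0).charpoly := by
  rw [← charpoly_submatrix_equiv (e.sumCongr e) (fromBlocks 0 X Xᴴ 0)]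
  congr 1
  ext (i | i) (j | j) <;> rfl

end Reindex

theorem stmt_7 (p q : ℕ) (hq : 1 ≤ q) (hpq : q ≤ p)
    (g : Fin (p + q) → ℝ) (hg : Antitone g) (hg0 : ∀ i, 0 ≤ g i)
    (s : Fin q → ℝ) (hs : Antitone s) (hs0 : ∀ i, 0 ≤ s i)
    (t : Fin q → ℝ) (ht : Antitone t) (ht0 : ∀ i, 0 ≤ t i) :
    (g, s, t) ∈ coneS p q ↔
      (hatPQ (p + q) (p + q) g, hatPQ p q s, hatPQ p q t) ∈ LRcone (p + q) (p + q) := by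
  have hE := charpoly_submatrix_equiv (finBlockEquiv p q)
  constructor
  · rintro ⟨X, hX, hXs, hXt⟩
    dsimp only at hX hXs hXt
    obtain rfl : g = fun i : Fin (p + q) => sval X i := funext hX
    obtain rfl : s = fun i : Fin q => sval (blockTR p q X) i := funext hXs
    obtain rfl : t = fun i : Fin q => sval (blockBL p q X) i := funext hXt
    set Z := X.submatrix (finSumFinEquiv (m := p) (n := q)) finSumFinEquiv with hZ
    set G := (fromBlocks 0 Z Zᴴ 0).submatrix cornerSwap cornerSwap with hG
    set M := G.submatrix (finBlockEquiv p q).symm (finBlockEquiv p q).symm with hMdef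
    have hMG : M.submatrix (finBlockEquiv p q) (finBlockEquiv p q) = G := by
      simp [hMdef]
    have hM : M.IsHermitian := ((isHermitian_fromBlocks_zero Z).submatrix _).submatrix _
    refine ⟨M, hM, ?_, ?_, ?_⟩
    · refine ((eigVec_eq_iff hM (hatPQ_antitone hg hg0)).2 ?_).symm
      rw [← hE, hMG, hG, charpoly_submatrix_cornerSwap, hZ, charpoly_fromBlocks_submatrix,
        charpoly_fromBlocks_eq_prod_hatPQ le_rfl]
    · refine ((eigVec_eq_iff (hM.submatrix _) (hatPQ_antitone hs hs0)).2 ?_).symm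
      rw [← charpoly_castAdd_block, hMG, hG, toBlocks₁₁_submatrix_cornerSwap,
        ← charpoly_fromBlocks_eq_prod_hatPQ hpq]
      rfl
    · refine ((eigVec_eq_iff (hM.submatrix _) (hatPQ_antitone ht ht0)).2 ?_).symm
      have hsv : ∀ i : Fin q, sval (blockBL p q X) i = sval (blockBL p q X)ᴴ i := by
        intro i
        rw [← sval_conjTranspose hpq, conjTranspose_conjTranspose]
      simp_rw [hsv]
      rw [← charpoly_natAdd_block, hMG, hG, toBlocks₂₂_submatrix_cornerSwap,
        ← charpoly_fromBlocks_eq_prod_hatPQ hpq, conjTranspose_conjTranspose]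
      rfl
  · rintro ⟨M, hM, hMg, hMs, hMt⟩
    have h₀ := (eigVec_eq_iff hM (hatPQ_antitone hg hg0)).1 hMg.symm
    have h₁ := (eigVec_eq_iff (hM.submatrix _) (hatPQ_antitone hs hs0)).1 hMs.symm
    have h₂ := (eigVec_eq_iff (hM.submatrix _) (hatPQ_antitone ht ht0)).1 hMt.symm
    rw [← hE] at h₀
    rw [← charpoly_castAdd_block] at h₁
    rw [← charpoly_natAdd_block] at h₂
    obtain ⟨Z, hZ⟩ := exists_charpoly_fromBlocks_eq_prod_hatPQ le_rfl g
    obtain ⟨S, hS⟩ := exists_charpoly_fromBlocks_eq_prod_hatPQ hpq s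
    obtain ⟨T, hT⟩ := exists_charpoly_fromBlocks_eq_prod_hatPQ hpq t
    obtain ⟨W, hW, rfl, hWT⟩ := exists_corners_eq_of_charpoly_eq (hM.submatrix _)
      (Z := Z.submatrix finSumFinEquiv finSumFinEquiv)
      (by rw [h₀, charpoly_fromBlocks_submatrix, hZ]) (h₁.trans hS.symm) (h₂.trans hT.symm)
    set X := W.submatrix (finSumFinEquiv (m := p) (n := q)).symm finSumFinEquiv.symm with hX
    have hTR : blockTR p q X = W.toBlocks₁₂ := by
      ext i j
      simp [hX, blockTR, toBlocks₁₂]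
    have hBL : blockBL p q X = Tᴴ := by
      rw [← hWT]
      ext i j
      simp [hX, blockBL, toBlocks₂₁]
    have hWX : X.submatrix finSumFinEquiv finSumFinEquiv = W := by simp [hX]
    refine ⟨X, sval_eq_of_charpoly_fromBlocks_eq le_rfl hg hg0 ?_, fun i => ?_, fun i => ?_⟩
    · rw [← charpoly_fromBlocks_submatrix finSumFinEquiv, hWX, hW,
        charpoly_fromBlocks_submatrix, hZ]
    · rw [hTR]
      exact sval_eq_of_charpoly_fromBlocks_eq hpq hs hs0 hS i
    · rw [hBL, sval_conjTranspose hpq]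
      exact sval_eq_of_charpoly_fromBlocks_eq hpq ht ht0 hT i
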